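/- arXiv:1806.04566 — 2 statements merged into one kernel-verified Lean document; each statement's English description precedes it below -/
import Mathlib

section
/- Let k ≥ 2 and j ∈ {1,…,k−1}. With high probability, there exists a 4-tuple (K,C,w,a) that forms a copy of M_j^* in G_p for every p in the range [p_{j−1}^−, p_j^{(1)}] simultaneously, where p_{j−1}^− := (1 − 1/√(log n))·j·(log n)·(k−j+1)!/((k−j+2)·n^{k−j+1}) and p_j^{(1)} := 1/(10·(j+1)·binom(k+1, j+1)·n^{k−j}). -/
open MeasureTheory Filter

attribute [local instance] Classical.propDecidable

namespace RSC

variable {V : Type*}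

/-- `A` is an `i`-dimensional simplex of the complex `G`. -/
def IsSimplex (G : Set (Finset V)) (i : ℕ) (A : Finset V) : Prop :=
  A ∈ G ∧ A.card = i + 1

/-- A `k`-dimensional simplicial complex on vertex set `V`. -/
structure IsKComplex (G : Set (Finset V)) (k : ℕ) : Prop where
  down : ∀ A ∈ G, ∀ B, B ⊆ A → B.Nonempty → B ∈ G
  singletons : ∀ v : V, ({v} : Finset V) ∈ G
  dim : ∀ A ∈ G, A.card ≤ k + 1

/-- `i`-cochains with `F₂`-coefficients. -/
abbrev Cochain (G : Set (Finset V)) (i : ℕ) : Type _ :=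
  {A : Finset V // IsSimplex G i A} → ZMod 2

/-- The coboundary map `δ^i : C^i(G) → C^{i+1}(G)`. -/
noncomputable def coboundary (G : Set (Finset V)) (i : ℕ) :
    Cochain G i →ₗ[ZMod 2] Cochain G (i + 1) where
  toFun f := fun σ => ∑ τ ∈ Finset.powersetCard (i + 1) (σ : Finset V),
      if h : IsSimplex G i τ then f ⟨τ, h⟩ else 0
  map_add' f g := by
    funext σ
    simp only [Pi.add_apply, ← Finset.sum_add_distrib]
    refine Finset.sum_congr rfl fun τ _ => ?_
    by_cases h : IsSimplex G i τ <;> simp [h]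
  map_smul' c f := by
    funext σ
    simp only [Pi.smul_apply, RingHom.id_apply, Finset.smul_sum]
    refine Finset.sum_congr rfl fun τ _ => ?_
    by_cases h : IsSimplex G i τ <;> simp [h]

/-- The submodule of `i`-cocycles. -/
noncomputable def cocycles (G : Set (Finset V)) (i : ℕ) : Submodule (ZMod 2) (Cochain G i) :=
  LinearMap.ker (coboundary G i)

/-- The submodule of `i`-coboundaries (`δ^{-1}` is the zero map). -/
noncomputable def coboundaries (G : Set (Finset V)) : (i : ℕ) → Submodule (ZMod 2) (Cochain G i)
  | 0 => ⊥
  | (i + 1) => LinearMap.range (coboundary G i)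

/-- The `i`-th cohomology group `H^i(G;F₂) = ker δ^i / im δ^{i-1}`. -/
noncomputable abbrev cohomology (G : Set (Finset V)) (i : ℕ) :=
  (cocycles G i) ⧸ ((coboundaries G i).comap (cocycles G i).subtype)

/-- `F₂`-cohomological `j`-connectedness: `H^0 ≅ F₂` and `H^i = 0` for `1 ≤ i ≤ j`. -/
def CohomConnected (G : Set (Finset V)) (j : ℕ) : Prop :=
  Nonempty (cohomology G 0 ≃ₗ[ZMod 2] ZMod 2) ∧
    ∀ i, 1 ≤ i → i ≤ j → Subsingleton (cohomology G i)

/-- The `j`-flower in `K` with centre `C`: the set of petals `C ∪ {w}`, `w ∈ K \ C`. -/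
def Flower [DecidableEq V] (K C : Finset V) : Set (Finset V) :=
  {P | ∃ w ∈ K \ C, P = insert w C}

/-- A copy of `M_j^-`: a `k`-simplex `K` together with a `(j-1)`-simplex `C ⊆ K` such that
each petal of the flower `F(K,C)` is contained in no `k`-simplex other than `K`. -/
def IsMjMinus [DecidableEq V] (G : Set (Finset V)) (k j : ℕ) (K C : Finset V) : Prop :=
  IsSimplex G k K ∧ C ∈ G ∧ C.card = j ∧ C ⊆ K ∧
    ∀ P ∈ Flower K C, ∀ K', IsSimplex G k K' → P ⊆ K' → K' = K

/-- A `j`-cycle: every `(j-1)`-simplex lies in an even number of members of `J`. -/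
def IsCycle (G : Set (Finset V)) (j : ℕ) (J : Finset (Finset V)) : Prop :=
  (∀ σ ∈ J, IsSimplex G j σ) ∧
    ∀ τ : Finset V, τ.card = j → Even (J.filter (fun σ => τ ⊆ σ)).card

/-- A copy of `M_j`. -/
def IsMj [DecidableEq V] (G : Set (Finset V)) (k j : ℕ) (K C : Finset V)
    (J : Finset (Finset V)) : Prop :=
  IsMjMinus G k j K C ∧ IsCycle G j J ∧ ∃! P : Finset V, P ∈ J ∧ P ∈ Flower K C

/-- A `j`-shell: a `(j+2)`-set all of whose `(j+1)`-subsets are `j`-simplices. -/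
def IsShell (G : Set (Finset V)) (j : ℕ) (A : Finset V) : Prop :=
  A.card = j + 2 ∧ ∀ τ ⊆ A, τ.card = j + 1 → τ ∈ G

/-- A copy of `M_j^*`. -/
def IsMjStar [DecidableEq V] (G : Set (Finset V)) (k j : ℕ) (K C : Finset V) (w a : V) : Prop :=
  IsMjMinus G k j K C ∧ w ∈ K \ C ∧ a ∉ K ∧ IsShell G j (insert a (insert w C))

/-- The support of a cochain. -/
def cochainSupport {G : Set (Finset V)} {i : ℕ} (f : Cochain G i) : Set (Finset V) :=
  {A | ∃ h : IsSimplex G i A, f ⟨A, h⟩ = 1}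

/-- A cochain arising from a copy of `M_j^-`: its support is the flower `F(K,C)`. -/
def ArisesFrom [DecidableEq V] (G : Set (Finset V)) (k j : ℕ) (f : Cochain G j)
    (K C : Finset V) : Prop :=
  IsMjMinus G k j K C ∧ cochainSupport f = Flower K C

/-- A `j`-cocycle generated by copies of `M_j^-`: it differs by a `j`-coboundary from a sum
of `j`-cocycles arising from copies of `M_j^-`. -/
def GeneratedByMjMinus [DecidableEq V] (G : Set (Finset V)) (k j : ℕ) (f : Cochain G j) : Prop :=
  ∃ (m : ℕ) (fs : Fin m → Cochain G j),
    (∀ i, ∃ K C, ArisesFrom G k j (fs i) K C) ∧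
      f - (∑ i, fs i) ∈ coboundaries G j

/-- Membership in `N_G`: a `j`-cocycle not generated by copies of `M_j^-`. -/
def InNG [DecidableEq V] (G : Set (Finset V)) (k j : ℕ) (f : Cochain G j) : Prop :=
  f ∈ cocycles G j ∧ ¬ GeneratedByMjMinus G k j f

/-- Traversability: the transitive closure of "lying in a common `k`-simplex" is `S × S`. -/
def Traversable (G : Set (Finset V)) (k : ℕ) (S : Set (Finset V)) : Prop :=
  ∀ σ₁ ∈ S, ∀ σ₂ ∈ S,
    Relation.TransGen
      (fun a b => a ∈ S ∧ b ∈ S ∧ ∃ K, IsSimplex G k K ∧ a ⊆ K ∧ b ⊆ K) σ₁ σ₂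

/-- A local obstacle: a `k`-simplex containing at least `k-j+1` many `j`-simplices,
each lying in no other `k`-simplex. -/
def IsLocalObstacle (G : Set (Finset V)) (k j : ℕ) (K : Finset V) : Prop :=
  IsSimplex G k K ∧
    k - j + 1 ≤ {σ : Finset V | IsSimplex G j σ ∧ σ ⊆ K ∧
      ∀ K', IsSimplex G k K' → σ ⊆ K' → K' = K}.ncard

/-- The random complex `G_p` given birth times `t`: all singletons together with all
non-empty subsets of `(k+1)`-sets with birth time at most `p`. -/
def complexAt (k n : ℕ) (t : Finset (Fin n) → ℝ) (p : ℝ) : Set (Finset (Fin n)) :=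
  {A | (∃ v, A = {v}) ∨
    (A.Nonempty ∧ ∃ K : Finset (Fin n), K.card = k + 1 ∧ t K ≤ p ∧ A ⊆ K)}

/-- The distribution of birth times: i.i.d. uniform on `[0,1]`. -/
noncomputable def birthMeasure (n : ℕ) : Measure (Finset (Fin n) → ℝ) :=
  Measure.pi fun _ => volume.restrict (Set.Icc (0 : ℝ) 1)

/-- `p_{M_j}`: the supremum of the probabilities `p ∈ [0,1]` at which `G_p` contains
a copy of `M_j`. -/
noncomputable def pMj (k j n : ℕ) (t : Finset (Fin n) → ℝ) : ℝ :=
  sSup {p : ℝ | p ∈ Set.Icc (0 : ℝ) 1 ∧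
    ∃ K C J, IsMj (complexAt k n t p) k j K C J}

/-- The threshold `p_j`. -/
noncomputable def pjThreshold (k j n : ℕ) : ℝ :=
  ((j + 1 : ℝ) * Real.log n + Real.log (Real.log n)) * (Nat.factorial (k - j)) /
    (((k - j + 1 : ℕ) : ℝ) * (n : ℝ) ^ (k - j))

/-- `p_j^-`. -/
noncomputable def pjMinus (k j n : ℕ) : ℝ :=
  (1 - 1 / Real.sqrt (Real.log n)) * ((j + 1 : ℝ) * Real.log n) * (Nat.factorial (k - j)) /
    (((k - j + 1 : ℕ) : ℝ) * (n : ℝ) ^ (k - j))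

/-- `p_{j-1}^-`. -/
noncomputable def pjPrevMinus (k j n : ℕ) : ℝ :=
  (1 - 1 / Real.sqrt (Real.log n)) * ((j : ℝ) * Real.log n) * (Nat.factorial (k - j + 1)) /
    (((k - j + 2 : ℕ) : ℝ) * (n : ℝ) ^ (k - j + 1))

/-- `p_j^{(1)}`. -/
noncomputable def pjOne (k j n : ℕ) : ℝ :=
  1 / (10 * ((j : ℝ) + 1) * (Nat.choose (k + 1) (j + 1)) * (n : ℝ) ^ (k - j))

/-- The number of copies of `M_j^-` in `G`. -/
noncomputable def countMjMinus (k j : ℕ) {n : ℕ} (G : Set (Finset (Fin n))) : ℕ :=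
  {x : Finset (Fin n) × Finset (Fin n) | IsMjMinus G k j x.1 x.2}.ncard

/-- The number of copies of `M_j^*` in `G`. -/
noncomputable def countMjStar (k j : ℕ) {n : ℕ} (G : Set (Finset (Fin n))) : ℕ :=
  {x : Finset (Fin n) × Finset (Fin n) × Fin n × Fin n |
    IsMjStar G k j x.1 x.2.1 x.2.2.1 x.2.2.2}.ncard

/-!
Fix a template for a copy of `M_j^*`: a `j`-shell and, for each of its `j + 2` faces, a `k`-simplex
completing it with `k - j` fresh vertices. If these `j + 2` simplices are born by time `p` and no
other `k`-simplex containing a petal is born by time `q`, the template is a copy of `M_j^*`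
throughout `[p, q]`, so it suffices to place the template once. Placements that put each slot of the
template into its own block of vertices overlap only slot by slot, and the second moment method
applies to them. Any `i` of the `j + 2` simplices span at least `i * (k - j + 1)` slots, so pairs
sharing a simplex are negligible once `n ^ (k - j + 1) * p → ∞`; the `O(n ^ (k - j))` obstructions
stay unborn with probability bounded below when `q = O(n ^ -(k - j))`; and two placements with
different centres share only `O(n ^ (k - j - 1))` obstructions, which makes them asymptotically
independent.
-/

section SecondMoment

variable {Ω ι : Type*} [MeasurableSpace Ω] {μ : Measure Ω} [IsFiniteMeasure μ]

lemma sq_integral_le_measureReal_mul_integral_sq {X : Ω → ℝ} {U : Set Ω} (hX : MemLp X 2 μ)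
    (hU : MeasurableSet U) (hXU : ∀ ω ∉ U, X ω = 0) :
    (∫ ω, X ω ∂μ) ^ 2 ≤ μ.real U * ∫ ω, X ω ^ 2 ∂μ := by
  have integrable_X : Integrable X μ := hX.integrable one_le_two
  have integrable_U : Integrable (U.indicator (1 : Ω → ℝ)) μ := (integrable_const 1).indicator hU
  have quadratic_nonneg (a : ℝ) :
      0 ≤ μ.real U * (a * a) + (-2 * ∫ ω, X ω ∂μ) * a + ∫ ω, X ω ^ 2 ∂μ := by
    have sq_expand (ω : Ω) : (a * U.indicator 1 ω - X ω) ^ 2 =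
        a * a * U.indicator 1 ω + (-2 * a * X ω + X ω ^ 2) := by
      by_cases hω : ω ∈ U
      · simp only [Set.indicator_of_mem hω, Pi.one_apply]; ring
      · simp [Set.indicator_of_notMem hω, hXU ω hω]
    have integrable_rest : Integrable (fun ω => -2 * a * X ω + X ω ^ 2) μ :=
      (integrable_X.const_mul _).add hX.integrable_sq
    have integral_expand : ∫ ω, (a * U.indicator 1 ω - X ω) ^ 2 ∂μ =
        a * a * μ.real U + (-2 * a * ∫ ω, X ω ∂μ + ∫ ω, X ω ^ 2 ∂μ) := by
      simp only [sq_expand]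
      rw [integral_add (integrable_U.const_mul _) integrable_rest, integral_add
        (integrable_X.const_mul _) hX.integrable_sq, integral_const_mul, integral_const_mul,
        integral_indicator_one hU]
    calc 0 ≤ ∫ ω, (a * U.indicator 1 ω - X ω) ^ 2 ∂μ := integral_nonneg fun ω => sq_nonneg _
      _ = _ := by rw [integral_expand]; ring
  have discrim_nonpos := discrim_le_zero quadratic_nonneg
  rw [discrim] at discrim_nonpos
  linarith

variable [Fintype ι] {E : ι → Set Ω}

/-- **Chung–Erdős inequality.** -/
lemma sq_sum_measureReal_le (hE : ∀ i, MeasurableSet (E i)) :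
    (∑ i, μ.real (E i)) ^ 2 ≤ μ.real (⋃ i, E i) * ∑ i, ∑ i', μ.real (E i ∩ E i') := by
  set X : Ω → ℝ := fun ω => ∑ i, (E i).indicator 1 ω with hX
  have memLp_X : MemLp X 2 μ :=
    memLp_finsetSum _ fun i _ => memLp_indicator_const 2 (hE i) 1 (.inr (measure_ne_top μ _))
  have X_eq_zero (ω : Ω) (hω : ω ∉ ⋃ i, E i) : X ω = 0 := Finset.sum_eq_zero fun i _ =>
    Set.indicator_of_notMem (fun hi => hω (Set.mem_iUnion_of_mem i hi)) _
  have integrable_one {s : Set Ω} (hs : MeasurableSet s) : Integrable (s.indicator (1 : Ω → ℝ)) μ :=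
    (integrable_const 1).indicator hs
  have integral_X : ∫ ω, X ω ∂μ = ∑ i, μ.real (E i) := by
    rw [integral_finsetSum _ fun i _ => integrable_one (hE i)]
    simp only [integral_indicator_one (hE _)]
  have integral_X_sq : ∫ ω, X ω ^ 2 ∂μ = ∑ i, ∑ i', μ.real (E i ∩ E i') := by
    have hEE (i i' : ι) : MeasurableSet (E i ∩ E i') := (hE i).inter (hE i')
    have X_sq (ω : Ω) : X ω ^ 2 = ∑ i, ∑ i', (E i ∩ E i').indicator 1 ω := by
      simp only [hX, sq, Finset.sum_mul_sum, Set.inter_indicator_one, Pi.mul_apply]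
    simp only [X_sq]
    rw [integral_finsetSum _ fun i _ => integrable_finsetSum _ fun i' _ =>
      integrable_one (hEE i i')]
    refine Finset.sum_congr rfl fun i _ => ?_
    rw [integral_finsetSum _ fun i' _ => integrable_one (hEE i i')]
    simp only [integral_indicator_one (hEE _ _)]
  rw [← integral_X, ← integral_X_sq]
  exact sq_integral_le_measureReal_mul_integral_sq memLp_X (.iUnion hE) X_eq_zero

lemma inv_le_measureReal_iUnion (hE : ∀ i, MeasurableSet (E i)) {r : ℝ}
    (hpos : 0 < ∑ i, μ.real (E i))
    (hr : ∑ i, ∑ i', μ.real (E i ∩ E i') ≤ r * (∑ i, μ.real (E i)) ^ 2) :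
    r⁻¹ ≤ μ.real (⋃ i, E i) := by
  have hsq : 0 < (∑ i, μ.real (E i)) ^ 2 := by positivity
  have hle : (∑ i, μ.real (E i)) ^ 2 ≤ μ.real (⋃ i, E i) * r * (∑ i, μ.real (E i)) ^ 2 := by
    rw [mul_assoc]
    exact (sq_sum_measureReal_le hE).trans (by gcongr)
  have hone : 1 ≤ μ.real (⋃ i, E i) * r := le_of_mul_le_mul_right (by rwa [one_mul]) hsq
  have hr_pos : 0 < r := pos_of_mul_pos_right (zero_lt_one.trans_le hone) measureReal_nonneg
  rwa [inv_le_iff_one_le_mul₀ hr_pos]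

end SecondMoment

section UniformCube

variable {κ : Type*} {p q : ℝ} {R R' F F' : Finset κ}

/-- The event that each coordinate in `R` is at most `p` and each coordinate in `F` exceeds `q`.
For birth times: every set in `R` is present at time `p` and no set in `F` is present at
time `q`. -/
def thresholdEvent (p q : ℝ) (R F : Finset κ) : Set (κ → ℝ) :=
  {t | (∀ K ∈ R, t K ≤ p) ∧ ∀ K ∈ F, q < t K}

lemma measurableSet_thresholdEvent : MeasurableSet (thresholdEvent p q R F) := by
  have : thresholdEvent p q R F = (⋂ K ∈ R, {t | t K ≤ p}) ∩ ⋂ K ∈ F, {t | q < t K} := by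
    ext t; simp [thresholdEvent]
  rw [this]
  exact (Finset.measurableSet_biInter _ fun K _ =>
      measurableSet_le (measurable_pi_apply K) measurable_const).inter
    (Finset.measurableSet_biInter _ fun K _ =>
      measurableSet_lt measurable_const (measurable_pi_apply K))

lemma thresholdEvent_inter [DecidableEq κ] :
    thresholdEvent p q R F ∩ thresholdEvent p q R' F' =
      thresholdEvent p q (R ∪ R') (F ∪ F') := by
  ext t
  simp only [thresholdEvent, Set.mem_inter_iff, Set.mem_ofPred_eq, Finset.forall_mem_union]
  tauto

lemma thresholdEvent_subset (hR : R' ⊆ R) (hF : F' ⊆ F) :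
    thresholdEvent p q R F ⊆ thresholdEvent p q R' F' :=
  fun _ ht => ⟨fun K hK => ht.1 K (hR hK), fun K hK => ht.2 K (hF hK)⟩

instance isProbabilityMeasure_volume_restrict_Icc :
    IsProbabilityMeasure (volume.restrict (Set.Icc (0 : ℝ) 1)) :=
  ⟨by simp⟩

/-- The law of a family, indexed by `κ`, of independent variables that are uniform on `[0,1]`.
`birthMeasure n` is the case `κ = Finset (Fin n)`. -/
noncomputable def uniformCube (κ : Type*) [Fintype κ] : Measure (κ → ℝ) :=
  Measure.pi fun _ => volume.restrict (Set.Icc 0 1)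

lemma measureReal_uniform_Iic {p : ℝ} (hp0 : 0 ≤ p) (hp1 : p ≤ 1) :
    (volume.restrict (Set.Icc (0 : ℝ) 1)).real (Set.Iic p) = p := by
  rw [measureReal_restrict_apply measurableSet_Iic, Set.inter_comm, ← Set.Ici_inter_Iic,
    Set.inter_assoc, Set.Iic_inter_Iic, Set.Ici_inter_Iic, inf_of_le_right hp1]
  simp [hp0]

lemma measureReal_uniform_Ioi {q : ℝ} (hq0 : 0 ≤ q) (hq1 : q ≤ 1) :
    (volume.restrict (Set.Icc (0 : ℝ) 1)).real (Set.Ioi q) = 1 - q := by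
  rw [← Set.compl_Iic, probReal_compl_eq_one_sub measurableSet_Iic,
    measureReal_uniform_Iic hq0 hq1]

lemma one_sub_mul_le_one_sub_pow {x : ℝ} (hx : x ≤ 1) (D : ℕ) : 1 - x * D ≤ (1 - x) ^ D := by
  have := one_add_mul_le_pow (a := -x) (by linarith) D
  rw [← sub_eq_add_neg] at this
  linarith

variable [Fintype κ]

instance : IsProbabilityMeasure (uniformCube κ) :=
  inferInstanceAs (IsProbabilityMeasure (Measure.pi _))

lemma measureReal_thresholdEvent (hRF : Disjoint R F) (hp0 : 0 ≤ p) (hp1 : p ≤ 1) (hq0 : 0 ≤ q)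
    (hq1 : q ≤ 1) :
    (uniformCube κ).real (thresholdEvent p q R F) = p ^ R.card * (1 - q) ^ F.card := by
  have event_eq_pi : thresholdEvent p q R F = Set.univ.pi fun K =>
      if K ∈ R then Set.Iic p else if K ∈ F then Set.Ioi q else Set.univ := by
    ext t
    simp only [thresholdEvent, Set.mem_ofPred_eq, Set.mem_univ_pi, ← forall_and]
    refine forall_congr' fun K => ?_
    by_cases hR : K ∈ R
    · simp [hR, Finset.disjoint_left.1 hRF hR]
    · by_cases hF : K ∈ F <;> simp [hR, hF]
  have factor (K : κ) : (volume.restrict (Set.Icc (0 : ℝ) 1)).real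
      (if K ∈ R then Set.Iic p else if K ∈ F then Set.Ioi q else Set.univ) =
      (if K ∈ R then p else 1) * if K ∈ F then 1 - q else 1 := by
    by_cases hR : K ∈ R
    · simp [hR, Finset.disjoint_left.1 hRF hR, measureReal_uniform_Iic hp0 hp1]
    · by_cases hF : K ∈ F <;> simp [hR, hF, measureReal_uniform_Ioi hq0 hq1]
  rw [event_eq_pi, Measure.real, uniformCube, Measure.pi_pi, ENNReal.toReal_prod]
  simp only [← Measure.real_def, factor, Finset.prod_mul_distrib, Finset.prod_ite_mem,
    Finset.univ_inter, Finset.prod_const]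

lemma measureReal_thresholdEvent_le (hp0 : 0 ≤ p) (hp1 : p ≤ 1) :
    (uniformCube κ).real (thresholdEvent p q R F) ≤ p ^ R.card := by
  have hfree : (uniformCube κ).real (thresholdEvent p 0 R ∅) = p ^ R.card := by
    simpa using measureReal_thresholdEvent (Finset.disjoint_empty_right R) hp0 hp1 le_rfl
      zero_le_one
  rw [← hfree]
  exact measureReal_mono fun t ht => ⟨ht.1, by simp⟩

lemma measureReal_thresholdEvent_inter_mul_le [DecidableEq κ] (hRF : Disjoint R F)
    (hRF' : Disjoint R' F') (hRR' : Disjoint R R') (hp0 : 0 ≤ p) (hp1 : p ≤ 1) (hq0 : 0 ≤ q)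
    (hq1 : q ≤ 1) {D : ℕ} (hD : (F ∩ F').card + (R.card + R'.card) ≤ D) :
    (uniformCube κ).real (thresholdEvent p q R F ∩ thresholdEvent p q R' F') * (1 - q * D) ≤
      (uniformCube κ).real (thresholdEvent p q R F) *
        (uniformCube κ).real (thresholdEvent p q R' F') := by
  have hq0' : 0 ≤ 1 - q := sub_nonneg.2 hq1
  have hcard : F.card + F'.card ≤ ((F ∪ F') \ (R ∪ R')).card + D := by
    have := Finset.card_union_add_card_inter F F'
    have := Finset.le_card_sdiff (R ∪ R') (F ∪ F')
    have := Finset.card_union_le R R'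
    omega
  have hinter : (uniformCube κ).real (thresholdEvent p q R F ∩ thresholdEvent p q R' F') ≤
      p ^ (R.card + R'.card) * (1 - q) ^ ((F ∪ F') \ (R ∪ R')).card := by
    rw [thresholdEvent_inter, ← Finset.card_union_of_disjoint hRR',
      ← measureReal_thresholdEvent Finset.disjoint_sdiff hp0 hp1 hq0 hq1]
    exact measureReal_mono (thresholdEvent_subset subset_rfl Finset.sdiff_subset)
  calc _ ≤ p ^ (R.card + R'.card) * (1 - q) ^ ((F ∪ F') \ (R ∪ R')).card * (1 - q) ^ D := by
        refine (mul_le_mul_of_nonneg_left (one_sub_mul_le_one_sub_pow hq1 D)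
          measureReal_nonneg).trans ?_
        gcongr
    _ = p ^ (R.card + R'.card) * (1 - q) ^ (((F ∪ F') \ (R ∪ R')).card + D) := by ring
    _ ≤ p ^ (R.card + R'.card) * (1 - q) ^ (F.card + F'.card) := by
        gcongr ?_ * ?_
        exact pow_le_pow_of_le_one hq0' (by linarith) hcard
    _ = _ := by
        rw [measureReal_thresholdEvent hRF hp0 hp1 hq0 hq1,
          measureReal_thresholdEvent hRF' hp0 hp1 hq0 hq1]
        ring

end UniformCube

section Placement

variable {ι α V : Type*}

lemma card_filter_agree_mul_pow [Fintype ι] [DecidableEq ι] [Fintype α] (f : ι → α) (T : Finset ι) :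
    (Finset.univ.filter fun g : ι → α => ∀ i ∈ T, f i = g i).card * Fintype.card α ^ T.card =
      Fintype.card (ι → α) := by
  have agree_eq_piFinset : (Finset.univ.filter fun g : ι → α => ∀ i ∈ T, f i = g i) =
      Fintype.piFinset fun i => if i ∈ T then {f i} else Finset.univ := by
    ext g
    simp only [Finset.mem_filter_univ, Fintype.mem_piFinset]
    refine forall_congr' fun i => ?_
    by_cases hi : i ∈ T <;> simp [hi, eq_comm]
  have card_factor (i : ι) : (if i ∈ T then ({f i} : Finset α) else Finset.univ).card =
      if i ∈ Tᶜ then Fintype.card α else 1 := by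
    by_cases hi : i ∈ T <;> simp [hi]
  rw [agree_eq_piFinset, Fintype.card_piFinset]
  simp only [card_factor, Finset.prod_ite_mem, Finset.univ_inter, Finset.prod_const]
  rw [← pow_add, add_comm, Finset.card_add_card_compl, Fintype.card_fun]

/-- The weight `c` if `f` and `g` agree on `T`, and `0` otherwise. Bounds that depend on where `f`
and `g` agree are written with it, so that they can be summed over all pairs. -/
noncomputable def agreeWeight (T : Finset ι) (c : ℝ) (f g : ι → α) : ℝ :=
  if ∀ i ∈ T, f i = g i then c else 0

lemma agreeWeight_of_agree {T : Finset ι} {f g : ι → α} (hfg : ∀ i ∈ T, f i = g i) (c : ℝ) :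
    agreeWeight T c f g = c :=
  if_pos hfg

lemma agreeWeight_nonneg (T : Finset ι) {c : ℝ} (hc : 0 ≤ c) (f g : ι → α) :
    0 ≤ agreeWeight T c f g :=
  ite_nonneg hc le_rfl

lemma sum_sum_agreeWeight [Fintype ι] [DecidableEq ι] [Fintype α] [Nonempty α] (T : Finset ι)
    (c : ℝ) :
    ∑ f : ι → α, ∑ g, agreeWeight T c f g =
      (Fintype.card (ι → α) : ℝ) ^ 2 / (Fintype.card α : ℝ) ^ T.card * c := by
  have inner_sum (f : ι → α) : ∑ g, agreeWeight T c f g =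
      Fintype.card (ι → α) / (Fintype.card α : ℝ) ^ T.card * c := by
    calc ∑ g, agreeWeight T c f g = ∑ g : ι → α with ∀ i ∈ T, f i = g i, c := by
          rw [Finset.sum_filter]
          exact Finset.sum_congr rfl fun g _ => by unfold agreeWeight; congr
      _ = _ := by
          rw [Finset.sum_const, nsmul_eq_mul, ← card_filter_agree_mul_pow f T]
          push_cast
          rw [mul_div_cancel_right₀ _ (by positivity)]
  simp only [inner_sum, Finset.sum_const, nsmul_eq_mul, Finset.card_univ]
  ring

/-- Split part of `V` into disjoint blocks of vertices indexed by `ι`, each a copy of `α`, by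
means of `e`. Then `place e f` puts slot `i` at the vertex number `f i` of block `i`. -/
def place (e : ι × α ↪ V) (f : ι → α) : ι ↪ V :=
  ⟨fun i => e (i, f i), fun _ _ h => congrArg Prod.fst (e.injective h)⟩

variable {e : ι × α ↪ V} {f g : ι → α} {i i' : ι} {S T : Finset ι}

lemma place_eq_place_iff : place e f i = place e g i' ↔ i = i' ∧ f i = g i' :=
  e.injective.eq_iff.trans Prod.ext_iff

lemma place_mem_map_place : place e f i ∈ T.map (place e g) ↔ i ∈ T ∧ f i = g i := by
  simp only [Finset.mem_map, place_eq_place_iff]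
  constructor
  · rintro ⟨i', hi', rfl, h⟩
    exact ⟨hi', h.symm⟩
  · rintro ⟨hi, h⟩
    exact ⟨i, hi, rfl, h.symm⟩

lemma map_place_eq_map_place_iff :
    S.map (place e f) = T.map (place e g) ↔ S = T ∧ ∀ i ∈ S, f i = g i := by
  constructor
  · intro h
    have hST (i : ι) (hi : i ∈ S) : i ∈ T ∧ f i = g i :=
      place_mem_map_place.1 (h ▸ Finset.mem_map_of_mem (place e f) hi)
    have hTS (i : ι) (hi : i ∈ T) : i ∈ S ∧ g i = f i :=
      place_mem_map_place.1 (h ▸ Finset.mem_map_of_mem (place e g) hi)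
    exact ⟨Finset.Subset.antisymm (fun i hi => (hST i hi).1) fun i hi => (hTS i hi).1,
      fun i hi => (hST i hi).2⟩
  · rintro ⟨rfl, hfg⟩
    exact Finset.ext fun v => by
      simp only [Finset.mem_map]
      exact exists_congr fun i => and_congr_right fun hi => by
        rw [place_eq_place_iff.2 ⟨rfl, hfg i hi⟩]

lemma disjoint_flower_map_place [DecidableEq V] (hfg : ¬ ∀ i ∈ S, f i = g i) :
    Disjoint (Flower (T.map (place e f)) (S.map (place e f)))
      (Flower (T.map (place e g)) (S.map (place e g))) := by
  refine Set.disjoint_left.2 ?_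
  rintro _ ⟨w, -, rfl⟩ ⟨w', hw', hww'⟩
  obtain ⟨hw'T, hw'S⟩ := Finset.mem_sdiff.1 hw'
  obtain ⟨i', -, rfl⟩ := Finset.mem_map.1 hw'T
  refine hfg fun i hi => ?_
  have petal_mem : place e f i ∈ insert (place e g i') (S.map (place e g)) :=
    hww' ▸ Finset.mem_insert_of_mem (Finset.mem_map_of_mem _ hi)
  rcases Finset.mem_insert.1 petal_mem with h | h
  · obtain ⟨rfl, -⟩ := place_eq_place_iff.1 h
    exact absurd (Finset.mem_map_of_mem _ hi) hw'S
  · exact (place_mem_map_place.1 h).2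

end Placement

section Obstructions

variable [Fintype V] [DecidableEq V] {k j : ℕ} {A K K' C C' : Finset V}

lemma card_supersets_le (d : ℕ) (A : Finset V) :
    ((Finset.univ.powersetCard d).filter (A ⊆ ·)).card ≤ Fintype.card V ^ (d - A.card) := by
  calc _ ≤ (Finset.univ.powersetCard (d - A.card) : Finset (Finset V)).card := by
        refine Finset.card_le_card_of_injOn (· \ A) (fun K hK => ?_) fun K hK K' hK' h => ?_
        · obtain ⟨hK, hAK⟩ := Finset.mem_filter.1 hK
          rw [Finset.mem_coe, Finset.mem_powersetCard_univ, Finset.card_sdiff_of_subset hAK,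
            Finset.mem_powersetCard_univ.1 hK]
        · rw [← Finset.sdiff_union_of_subset (Finset.mem_filter.1 hK).2,
            show K \ A = K' \ A from h, Finset.sdiff_union_of_subset (Finset.mem_filter.1 hK').2]
    _ ≤ Fintype.card V ^ (d - A.card) := by
        rw [Finset.card_powersetCard, Finset.card_univ]
        exact Nat.choose_le_pow _ _

/-- The `(k+1)`-sets whose presence as `k`-simplices prevents `(K, C)` from being a copy of
`M_j^-`. -/
def obstructions (k : ℕ) (K C : Finset V) : Finset (Finset V) :=
  (Finset.univ.powersetCard (k + 1)).filter fun K' => K' ≠ K ∧ ∃ w ∈ K \ C, insert w C ⊆ K'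

lemma mem_obstructions :
    K' ∈ obstructions k K C ↔ K'.card = k + 1 ∧ K' ≠ K ∧ ∃ w ∈ K \ C, insert w C ⊆ K' := by
  rw [obstructions, Finset.mem_filter, Finset.mem_powersetCard_univ]

lemma card_obstructions_le (k : ℕ) (K C : Finset V) :
    (obstructions k K C).card ≤ (K \ C).card * Fintype.card V ^ (k - C.card) := by
  have hsub : obstructions k K C ⊆ (K \ C).biUnion fun w =>
      (Finset.univ.powersetCard (k + 1)).filter (insert w C ⊆ ·) := fun K' hK' => by
    obtain ⟨hcard, -, w, hw, hwK'⟩ := mem_obstructions.1 hK'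
    exact Finset.mem_biUnion.2
      ⟨w, hw, Finset.mem_filter.2 ⟨Finset.mem_powersetCard_univ.2 hcard, hwK'⟩⟩
  refine (Finset.card_le_card hsub).trans (Finset.card_biUnion_le_card_mul _ _ _ fun w hw => ?_)
  have := card_supersets_le (k + 1) (insert w C)
  rwa [Finset.card_insert_of_notMem (Finset.mem_sdiff.1 hw).2, Nat.add_sub_add_right] at this

lemma card_obstructions_inter_le (k : ℕ) (hC : C.card = C'.card)
    (hflower : Disjoint (Flower K C) (Flower K' C')) :
    (obstructions k K C ∩ obstructions k K' C').card ≤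
      (K \ C).card * (K' \ C').card * Fintype.card V ^ (k - C.card - 1) := by
  have hsub : obstructions k K C ∩ obstructions k K' C' ⊆
      ((K \ C) ×ˢ (K' \ C')).biUnion fun w =>
        (Finset.univ.powersetCard (k + 1)).filter (insert w.1 C ∪ insert w.2 C' ⊆ ·) := by
    intro L hL
    obtain ⟨hL, hL'⟩ := Finset.mem_inter.1 hL
    obtain ⟨hcard, -, w, hw, hwL⟩ := mem_obstructions.1 hL
    obtain ⟨-, -, w', hw', hwL'⟩ := mem_obstructions.1 hL'
    exact Finset.mem_biUnion.2 ⟨(w, w'), Finset.mk_mem_product hw hw', Finset.mem_filter.2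
      ⟨Finset.mem_powersetCard_univ.2 hcard, Finset.union_subset hwL hwL'⟩⟩
  rw [← Finset.card_product]
  refine (Finset.card_le_card hsub).trans (Finset.card_biUnion_le_card_mul _ _ _ ?_)
  rintro ⟨w, w'⟩ hw
  obtain ⟨hw, hw'⟩ := Finset.mem_product.1 hw
  have hne : insert w C ≠ insert w' C' := fun h =>
    Set.disjoint_left.1 hflower ⟨w, hw, rfl⟩ ⟨w', hw', h⟩
  have hcard : (insert w C).card = C.card + 1 :=
    Finset.card_insert_of_notMem (Finset.mem_sdiff.1 hw).2
  have hcard' : (insert w' C').card = C.card + 1 := by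
    rw [Finset.card_insert_of_notMem (Finset.mem_sdiff.1 hw').2, hC]
  have hlt : (insert w' C').card < (insert w C ∪ insert w' C').card := by
    refine Finset.card_lt_card ((Finset.ssubset_iff_subset_ne).2
      ⟨Finset.subset_union_right, fun h => hne ?_⟩)
    exact Finset.eq_of_subset_of_card_le (h ▸ Finset.subset_union_left) (by omega)
  have hV : 0 < Fintype.card V := Fintype.card_pos_iff.2 ⟨w⟩
  exact (card_supersets_le (k + 1) _).trans (Nat.pow_le_pow_right hV (by grind))

end Obstructions

section Persistence

variable {k j n : ℕ} {t : Finset (Fin n) → ℝ} {r : ℝ} {A K C : Finset (Fin n)}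

lemma le_of_isSimplex_complexAt (hk : 0 < k) (hK : IsSimplex (complexAt k n t r) k K) :
    t K ≤ r := by
  rcases hK with ⟨⟨v, rfl⟩ | ⟨-, K', hK', htK', hKK'⟩, hcard⟩
  · rw [Finset.card_singleton] at hcard
    omega
  · rwa [Finset.eq_of_subset_of_card_le hKK' (by omega)]

lemma isMjMinus_complexAt (hk : 0 < k) (hC : C.Nonempty) (hCK : C ⊆ K) (hK : K.card = k + 1)
    (hborn : t K ≤ r) (hunborn : ∀ K' ∈ obstructions k K C, r < t K') :
    IsMjMinus (complexAt k n t r) k C.card K C := by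
  refine ⟨⟨.inr ⟨hC.mono hCK, K, hK, hborn, subset_rfl⟩, hK⟩, .inr ⟨hC, K, hK, hborn, hCK⟩, rfl,
    hCK, ?_⟩
  rintro _ ⟨w, hw, rfl⟩ K' hK' hwK'
  by_contra hne
  have hobstruction : K' ∈ obstructions k K C := mem_obstructions.2 ⟨hK'.2, hne, w, hw, hwK'⟩
  exact (hunborn K' hobstruction).not_ge (le_of_isSimplex_complexAt hk hK')

lemma isShell_complexAt (hA : A.card = j + 2)
    (hborn : ∀ v ∈ A, ∃ K, K.card = k + 1 ∧ t K ≤ r ∧ A.erase v ⊆ K) :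
    IsShell (complexAt k n t r) j A := by
  refine ⟨hA, fun τ hτA hτ => ?_⟩
  obtain ⟨v, hvA, hvτ⟩ : ∃ v ∈ A, v ∉ τ := Finset.exists_mem_notMem_of_card_lt_card (by omega)
  obtain ⟨K, hK, htK, hvK⟩ := hborn v hvA
  have hτv : τ ⊆ A.erase v := fun u hu =>
    Finset.mem_erase.2 ⟨ne_of_mem_of_not_mem hu hvτ, hτA hu⟩
  exact .inr ⟨Finset.card_pos.1 (by omega), K, hK, htK, hτv.trans hvK⟩

end Persistence

section Template

/-- The vertices of a copy of `M_j^*` together with `k`-simplices witnessing its `j`-shell: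
`Sum.inl i` is the `i`-th vertex of the shell, where `0` plays the role of `a` and `1` that of `w`,
and `Sum.inr (s, l)` are the further vertices of the `k`-simplex containing the `s`-th face of the
shell. -/
abbrev Slot (k j : ℕ) : Type := Fin (j + 2) ⊕ Fin (j + 2) × Fin (k - j)

/-- The vertices of the `k`-simplex that contains all vertices of the shell but the `s`-th. -/
def faceSlots (k j : ℕ) (s : Fin (j + 2)) : Finset (Slot k j) :=
  Finset.disjSum {s}ᶜ ({s} ×ˢ Finset.univ)

/-- The vertices of the centre `C`. -/
def centreSlots (k j : ℕ) : Finset (Slot k j) :=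
  Finset.disjSum {0, 1}ᶜ ∅

variable {k j : ℕ} {i s : Fin (j + 2)} {l : Fin (k - j)}

@[simp]
lemma inl_mem_faceSlots : Sum.inl i ∈ faceSlots k j s ↔ i ≠ s := by
  simp [faceSlots]

@[simp]
lemma inr_mem_faceSlots : Sum.inr (i, l) ∈ faceSlots k j s ↔ i = s := by
  simp [faceSlots, eq_comm]

@[simp]
lemma inl_mem_centreSlots : Sum.inl i ∈ centreSlots k j ↔ i ≠ 0 ∧ i ≠ 1 := by
  simp [centreSlots]

@[simp]
lemma inr_notMem_centreSlots {x : Fin (j + 2) × Fin (k - j)} :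
    Sum.inr x ∉ centreSlots k j := by
  simp [centreSlots]

lemma card_faceSlots (hjk : j ≤ k) (s : Fin (j + 2)) : (faceSlots k j s).card = k + 1 := by
  rw [faceSlots, Finset.card_disjSum, Finset.card_compl, Finset.card_product, Finset.card_singleton,
    Finset.card_univ, Fintype.card_fin, Fintype.card_fin]
  omega

lemma card_centreSlots (k j : ℕ) : (centreSlots k j).card = j := by
  simp [centreSlots, Finset.card_compl]

lemma centreSlots_subset_faceSlots_zero (k j : ℕ) : centreSlots k j ⊆ faceSlots k j 0 := by
  rintro (i | x) hi
  · exact inl_mem_faceSlots.2 (inl_mem_centreSlots.1 hi).1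
  · exact absurd hi inr_notMem_centreSlots

lemma insert_insert_centreSlots (k j : ℕ) :
    insert (Sum.inl 0) (insert (Sum.inl 1) (centreSlots k j)) = Finset.disjSum Finset.univ ∅ := by
  ext (i | x)
  · simp only [Finset.mem_insert, Sum.inl.injEq, inl_mem_centreSlots, Finset.inl_mem_disjSum,
      Finset.mem_univ, iff_true]
    tauto
  · simp

lemma faceSlots_injective (k j : ℕ) : Function.Injective (faceSlots k j) := fun s s' h => by
  by_contra hne
  exact inl_mem_faceSlots.1 (h ▸ inl_mem_faceSlots.2 hne : Sum.inl s ∈ faceSlots k j s) rfl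

lemma card_mul_le_card_biUnion_faceSlots (k : ℕ) (S : Finset (Fin (j + 2))) :
    S.card * (k - j + 1) ≤ (S.biUnion (faceSlots k j)).card := by
  have hsub : (S.map (Equiv.addRight 1).toEmbedding).disjSum (S ×ˢ Finset.univ) ⊆
      S.biUnion (faceSlots k j) := by
    rintro (i | ⟨s, l⟩) hi
    · obtain ⟨s, hs, rfl⟩ := Finset.mem_map.1 (Finset.inl_mem_disjSum.1 hi)
      exact Finset.mem_biUnion.2 ⟨s, hs, inl_mem_faceSlots.2 (by simp)⟩
    · have hs := (Finset.mem_product.1 (Finset.inr_mem_disjSum.1 hi)).1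
      exact Finset.mem_biUnion.2 ⟨s, hs, inr_mem_faceSlots.2 rfl⟩
  calc S.card * (k - j + 1)
      = ((S.map (Equiv.addRight 1).toEmbedding).disjSum (S ×ˢ Finset.univ)).card := by
        rw [Finset.card_disjSum, Finset.card_map, Finset.card_product, Finset.card_univ,
          Fintype.card_fin]
        ring
    _ ≤ _ := Finset.card_le_card hsub

variable {α V : Type*} (e : Slot k j × α ↪ V) (f : Slot k j → α)

/-- The `k`-simplices that complete the faces of the shell in the placement `place e f` of the
template. -/
def placedFace : Fin (j + 2) ↪ Finset V :=
  ⟨fun s => (faceSlots k j s).map (place e f),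
    (Finset.map_injective _).comp (faceSlots_injective k j)⟩

/-- The centre of the copy of `M_j^*` in the placement `place e f` of the template. -/
def placedCentre : Finset V :=
  (centreSlots k j).map (place e f)

/-- The `k`-simplices needed for the placement `place e f` of the template to give a copy of
`M_j^*`. -/
def requiredFaces : Finset (Finset V) :=
  Finset.univ.map (placedFace e f)

/-- The indices of the faces of the template that both placements put at the same `k`-simplex. -/
noncomputable def sharedFaces (f g : Slot k j → α) : Finset (Fin (j + 2)) :=
  Finset.univ.filter fun s => ∀ i ∈ faceSlots k j s, f i = g i

lemma card_placedFace (hjk : j ≤ k) (s : Fin (j + 2)) : (placedFace e f s).card = k + 1 :=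
  (Finset.card_map _).trans (card_faceSlots hjk s)

lemma card_placedCentre : (placedCentre e f).card = j :=
  (Finset.card_map _).trans (card_centreSlots k j)

lemma placedCentre_subset_placedFace_zero : placedCentre e f ⊆ placedFace e f 0 :=
  Finset.map_subset_map.2 (centreSlots_subset_faceSlots_zero k j)

lemma card_requiredFaces : (requiredFaces e f).card = j + 2 := by
  rw [requiredFaces, Finset.card_map, Finset.card_univ, Fintype.card_fin]

variable {e f} {g : Slot k j → α}

lemma place_mem_placedFace {i : Slot k j} : place e f i ∈ placedFace e f s ↔ i ∈ faceSlots k j s :=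
  Finset.mem_map' _

lemma place_mem_placedCentre {i : Slot k j} :
    place e f i ∈ placedCentre e f ↔ i ∈ centreSlots k j :=
  Finset.mem_map' _

lemma mem_sharedFaces : s ∈ sharedFaces f g ↔ ∀ i ∈ faceSlots k j s, f i = g i := by
  rw [sharedFaces, Finset.mem_filter_univ]

lemma placedFace_eq_placedFace_iff {s' : Fin (j + 2)} :
    placedFace e f s = placedFace e g s' ↔ s = s' ∧ s ∈ sharedFaces f g :=
  map_place_eq_map_place_iff.trans <| and_congr (faceSlots_injective k j).eq_iff
    mem_sharedFaces.symm

lemma agree_on_biUnion_sharedFaces :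
    ∀ i ∈ (sharedFaces f g).biUnion (faceSlots k j), f i = g i := by
  intro i hi
  obtain ⟨s, hs, his⟩ := Finset.mem_biUnion.1 hi
  exact mem_sharedFaces.1 hs i his

variable [DecidableEq V]

lemma requiredFaces_inter :
    requiredFaces e f ∩ requiredFaces e g = (sharedFaces f g).map (placedFace e f) := by
  ext K
  simp only [requiredFaces, Finset.mem_inter, Finset.mem_map, Finset.mem_univ, true_and]
  constructor
  · rintro ⟨⟨s, rfl⟩, s', h⟩
    exact ⟨s, (placedFace_eq_placedFace_iff.1 h.symm).2, rfl⟩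
  · rintro ⟨s, hs, rfl⟩
    exact ⟨⟨s, rfl⟩, s, (placedFace_eq_placedFace_iff.2 ⟨rfl, hs⟩).symm⟩

lemma card_placedFace_sdiff_placedCentre (hjk : j ≤ k) :
    (placedFace e f 0 \ placedCentre e f).card = k - j + 1 := by
  rw [Finset.card_sdiff_of_subset (placedCentre_subset_placedFace_zero e f),
    card_placedFace e f hjk, card_placedCentre]
  omega

variable [Fintype V]

/-- The `k`-simplices that must be absent for the placement `place e f` of the template to give
a copy of `M_j^*`. -/
def forbiddenFaces (e : Slot k j × α ↪ V) (f : Slot k j → α) : Finset (Finset V) :=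
  obstructions k (placedFace e f 0) (placedCentre e f)

lemma card_forbiddenFaces_le (hjk : j ≤ k) :
    (forbiddenFaces e f).card ≤ (k - j + 1) * Fintype.card V ^ (k - j) := by
  have := card_obstructions_le k (placedFace e f 0) (placedCentre e f)
  rwa [card_placedFace_sdiff_placedCentre hjk, card_placedCentre] at this

lemma card_forbiddenFaces_inter_le (hjk : j ≤ k) (hfg : ¬ ∀ i ∈ centreSlots k j, f i = g i) :
    (forbiddenFaces e f ∩ forbiddenFaces e g).card ≤
      (k - j + 1) ^ 2 * Fintype.card V ^ (k - j - 1) := by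
  have hflower : Disjoint (Flower (placedFace e f 0) (placedCentre e f))
      (Flower (placedFace e g 0) (placedCentre e g)) := disjoint_flower_map_place hfg
  have := card_obstructions_inter_le k (by simp only [card_placedCentre]) hflower
  rwa [card_placedFace_sdiff_placedCentre hjk, card_placedFace_sdiff_placedCentre hjk,
    card_placedCentre, ← sq] at this

lemma disjoint_requiredFaces_forbiddenFaces :
    Disjoint (requiredFaces e f) (forbiddenFaces e f) := by
  refine Finset.disjoint_left.2 fun K hK hobs => ?_
  obtain ⟨s, -, rfl⟩ := Finset.mem_map.1 hK
  obtain ⟨-, hne, w, hw, hsub⟩ := mem_obstructions.1 hobs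
  obtain ⟨hw0, hwC⟩ := Finset.mem_sdiff.1 hw
  obtain ⟨u, hu0, rfl⟩ := Finset.mem_map.1 hw0
  have hus : u ∈ faceSlots k j s := place_mem_placedFace.1 (hsub (Finset.mem_insert_self _ _))
  have hs0 : s ≠ 0 := ne_of_apply_ne _ hne
  have hs1 : s = 1 := by
    by_contra hs1
    have hsC : place e f (Sum.inl s) ∈ placedCentre e f :=
      place_mem_placedCentre.2 (inl_mem_centreSlots.2 ⟨hs0, hs1⟩)
    exact inl_mem_faceSlots.1 (place_mem_placedFace.1 (hsub (Finset.mem_insert_of_mem hsC))) rfl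
  subst hs1
  rcases u with i | ⟨i, l⟩
  · exact hwC (place_mem_placedCentre.2 (inl_mem_centreSlots.2
      ⟨inl_mem_faceSlots.1 hu0, inl_mem_faceSlots.1 hus⟩))
  · exact hs0 ((inr_mem_faceSlots.1 hus).symm.trans (inr_mem_faceSlots.1 hu0))

lemma isMjStar_complexAt_of_mem_thresholdEvent {n : ℕ} {e : Slot k j × α ↪ Fin n} (hj : 0 < j)
    (hjk : j < k) {p q r : ℝ} {t : Finset (Fin n) → ℝ}
    (ht : t ∈ thresholdEvent p q (requiredFaces e f) (forbiddenFaces e f)) (hpr : p ≤ r)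
    (hrq : r ≤ q) :
    IsMjStar (complexAt k n t r) k j (placedFace e f 0) (placedCentre e f) (place e f (Sum.inl 1))
      (place e f (Sum.inl 0)) := by
  have hborn (s : Fin (j + 2)) : t (placedFace e f s) ≤ r :=
    (ht.1 _ (Finset.mem_map_of_mem _ (Finset.mem_univ s))).trans hpr
  have hcard := card_placedFace e f hjk.le
  have hminus : IsMjMinus (complexAt k n t r) k j (placedFace e f 0) (placedCentre e f) := by
    have hne : (placedCentre e f).Nonempty :=
      Finset.card_pos.1 (hj.trans_eq (card_placedCentre e f).symm)
    have := isMjMinus_complexAt (hj.trans hjk) hne (placedCentre_subset_placedFace_zero e f)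
      (hcard 0) (hborn 0) fun K' hK' => hrq.trans_lt (ht.2 K' hK')
    rwa [card_placedCentre] at this
  have shell_eq : insert (place e f (Sum.inl 0)) (insert (place e f (Sum.inl 1))
      (placedCentre e f)) = (Finset.disjSum Finset.univ ∅).map (place e f) := by
    rw [placedCentre, ← Finset.map_insert, ← Finset.map_insert, insert_insert_centreSlots]
  refine ⟨hminus, ?_, ?_, ?_⟩
  · rw [Finset.mem_sdiff, place_mem_placedFace, place_mem_placedCentre]
    exact ⟨inl_mem_faceSlots.2 one_ne_zero, fun h => (inl_mem_centreSlots.1 h).2 rfl⟩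
  · rw [place_mem_placedFace]
    exact fun h => inl_mem_faceSlots.1 h rfl
  · rw [shell_eq]
    refine isShell_complexAt (by simp) fun v hv => ?_
    obtain ⟨i | x, hi, rfl⟩ := Finset.mem_map.1 hv
    · refine ⟨_, hcard i, hborn i, ?_⟩
      rw [← Finset.map_erase]
      refine Finset.map_subset_map.2 ?_
      rintro (i' | x) hi'
      · simpa using hi'
      · simp at hi'
    · simp at hi

end Template

section CopyEvent

variable {k j : ℕ} {α V : Type*} [Fintype V] {p q : ℝ} {D : ℕ} {e : Slot k j × α ↪ V}
  {f g : Slot k j → α}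

/-- The event that the placement `place e f` of the template gives a copy of `M_j^*` at every time
between `p` and `q`. -/
def copyEvent [DecidableEq V] (p q : ℝ) (e : Slot k j × α ↪ V) (f : Slot k j → α) :
    Set (Finset V → ℝ) :=
  thresholdEvent p q (requiredFaces e f) (forbiddenFaces e f)

/-- An upper bound for the probability that both `place e f` and `place e g` give a copy of `M_j^*`
when the two placements share their centre or some faces. The sum runs over all sets of
possibly shared faces, so that each summand only asks for agreement of `f` and `g` on a fixed set
of slots. -/
noncomputable def overlapWeight (p : ℝ) (f g : Slot k j → α) : ℝ :=
  agreeWeight (centreSlots k j) (p ^ (2 * (j + 2))) f g +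
    ∑ S ∈ (Finset.univ : Finset (Finset (Fin (j + 2)))).erase ∅,
      agreeWeight (S.biUnion (faceSlots k j)) (p ^ (2 * (j + 2)) / p ^ S.card) f g

variable [DecidableEq V]

lemma measurableSet_copyEvent : MeasurableSet (copyEvent p q e f) :=
  measurableSet_thresholdEvent

lemma mul_pow_le_measureReal_copyEvent (hjk : j ≤ k) (hp0 : 0 ≤ p) (hp1 : p ≤ 1) (hq0 : 0 ≤ q)
    (hq1 : q ≤ 1) {c : ℝ} (hc : c ≤ (1 - q) ^ ((k - j + 1) * Fintype.card V ^ (k - j))) :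
    c * p ^ (j + 2) ≤ (uniformCube (Finset V)).real (copyEvent p q e f) := by
  rw [copyEvent, measureReal_thresholdEvent disjoint_requiredFaces_forbiddenFaces hp0 hp1 hq0 hq1,
    card_requiredFaces, mul_comm]
  gcongr
  exact hc.trans (pow_le_pow_of_le_one (sub_nonneg.2 hq1) (sub_le_self 1 hq0)
    (card_forbiddenFaces_le hjk))

lemma measureReal_copyEvent_inter_le_div (hp0 : 0 < p) (hp1 : p ≤ 1) :
    (uniformCube (Finset V)).real (copyEvent p q e f ∩ copyEvent p q e g) ≤
      p ^ (2 * (j + 2)) / p ^ (sharedFaces f g).card := by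
  have hunion : (requiredFaces e f ∪ requiredFaces e g).card + (sharedFaces f g).card =
      2 * (j + 2) := by
    rw [← Finset.card_map (placedFace e f), ← requiredFaces_inter,
      Finset.card_union_add_card_inter, card_requiredFaces, card_requiredFaces, two_mul]
  rw [copyEvent, copyEvent, thresholdEvent_inter, le_div_iff₀ (by positivity), ← hunion, pow_add]
  gcongr
  exact measureReal_thresholdEvent_le hp0.le hp1

lemma measureReal_copyEvent_inter_mul_le (hjk : j ≤ k) (hp0 : 0 ≤ p) (hp1 : p ≤ 1) (hq0 : 0 ≤ q)
    (hq1 : q ≤ 1) (hD : (k - j + 1) ^ 2 * Fintype.card V ^ (k - j - 1) + 2 * (j + 2) ≤ D)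
    (hshared : sharedFaces f g = ∅) (hcentre : ¬ ∀ i ∈ centreSlots k j, f i = g i) :
    (uniformCube (Finset V)).real (copyEvent p q e f ∩ copyEvent p q e g) * (1 - q * D) ≤
      (uniformCube (Finset V)).real (copyEvent p q e f) *
        (uniformCube (Finset V)).real (copyEvent p q e g) := by
  have hdisj : Disjoint (requiredFaces e f) (requiredFaces e g) := by
    rw [Finset.disjoint_iff_inter_eq_empty, requiredFaces_inter, hshared, Finset.map_empty]
  have hinter := card_forbiddenFaces_inter_le (e := e) hjk hcentre
  exact measureReal_thresholdEvent_inter_mul_le disjoint_requiredFaces_forbiddenFaces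
    disjoint_requiredFaces_forbiddenFaces hdisj hp0 hp1 hq0 hq1
    (by rw [card_requiredFaces, card_requiredFaces]; omega)

lemma measureReal_copyEvent_inter_le (hjk : j ≤ k) (hp0 : 0 < p) (hp1 : p ≤ 1) (hq0 : 0 ≤ q)
    (hq1 : q ≤ 1) (hD : (k - j + 1) ^ 2 * Fintype.card V ^ (k - j - 1) + 2 * (j + 2) ≤ D)
    (hqD : q * D < 1) :
    (uniformCube (Finset V)).real (copyEvent p q e f ∩ copyEvent p q e g) ≤
      (uniformCube (Finset V)).real (copyEvent p q e f) *
          (uniformCube (Finset V)).real (copyEvent p q e g) / (1 - q * D) +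
        overlapWeight p f g := by
  have hqD' : 0 < 1 - q * D := sub_pos.2 hqD
  have hcentre_nonneg :=
    agreeWeight_nonneg (centreSlots k j) (pow_nonneg hp0.le (2 * (j + 2))) f g
  have hface_nonneg (S : Finset (Fin (j + 2))) :=
    agreeWeight_nonneg (S.biUnion (faceSlots k j))
      (div_nonneg (pow_nonneg hp0.le (2 * (j + 2))) (pow_nonneg hp0.le S.card)) f g
  have hsum_nonneg := Finset.sum_nonneg fun S (_ : S ∈ Finset.univ.erase ∅) => hface_nonneg S
  have hdiv := measureReal_copyEvent_inter_le_div (q := q) (e := e) (f := f) (g := g) hp0 hp1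
  rw [overlapWeight]
  by_cases hshared : sharedFaces f g = ∅
  · by_cases hcentre : ∀ i ∈ centreSlots k j, f i = g i
    · rw [hshared, Finset.card_empty, pow_zero, div_one] at hdiv
      rw [agreeWeight_of_agree hcentre]
      exact hdiv.trans (le_add_of_nonneg_of_le (by positivity) (le_add_of_nonneg_right hsum_nonneg))
    · refine le_add_of_le_of_nonneg ?_ (add_nonneg hcentre_nonneg hsum_nonneg)
      rw [le_div_iff₀ hqD']
      exact measureReal_copyEvent_inter_mul_le hjk hp0.le hp1 hq0 hq1 hD hshared hcentre
  · have hsingle := Finset.single_le_sum (fun S _ => hface_nonneg S)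
      (Finset.mem_erase.2 ⟨hshared, Finset.mem_univ _⟩)
    rw [agreeWeight_of_agree agree_on_biUnion_sharedFaces] at hsingle
    exact (hdiv.trans hsingle).trans (le_add_of_nonneg_of_le (by positivity)
      (le_add_of_nonneg_left hcentre_nonneg))

variable [Fintype α] [Nonempty α]

lemma sum_overlapWeight_le (hj : 0 < j) (hp0 : 0 < p) {x : ℝ}
    (hx : x = (Fintype.card α : ℝ) ^ (k - j + 1) * p) (hx1 : 1 ≤ x) :
    ∑ f : Slot k j → α, ∑ g, overlapWeight p f g ≤
      ((Fintype.card (Slot k j → α) : ℝ) * p ^ (j + 2)) ^ 2 *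
        (1 / Fintype.card α + 2 ^ (j + 2) / x) := by
  set M : ℝ := (Fintype.card (Slot k j → α) : ℝ)
  set m : ℝ := (Fintype.card α : ℝ)
  have hm1 : 1 ≤ m := by exact Nat.one_le_cast.2 Fintype.card_pos
  have hcentre : M ^ 2 / m ^ (centreSlots k j).card * p ^ (2 * (j + 2)) ≤
      (M * p ^ (j + 2)) ^ 2 * (1 / m) := by
    rw [card_centreSlots]
    calc _ ≤ M ^ 2 / m * p ^ (2 * (j + 2)) := by gcongr; exact le_self_pow₀ hm1 hj.ne'
      _ = _ := by ring
  have hface (S : Finset (Fin (j + 2))) (hS : S ∈ Finset.univ.erase ∅) :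
      M ^ 2 / m ^ (S.biUnion (faceSlots k j)).card * (p ^ (2 * (j + 2)) / p ^ S.card) ≤
        (M * p ^ (j + 2)) ^ 2 / x := by
    have hS0 : S.card ≠ 0 := Finset.card_ne_zero.2
      (Finset.nonempty_iff_ne_empty.2 (Finset.ne_of_mem_erase hS))
    calc _ ≤ M ^ 2 / m ^ (S.card * (k - j + 1)) * (p ^ (2 * (j + 2)) / p ^ S.card) := by
          gcongr
          exact card_mul_le_card_biUnion_faceSlots k S
      _ = (M * p ^ (j + 2)) ^ 2 / x ^ S.card := by rw [hx]; field_simp; ring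
      _ ≤ (M * p ^ (j + 2)) ^ 2 / x := by gcongr; exact le_self_pow₀ hx1 hS0
  have hcard : ((Finset.univ.erase ∅ : Finset (Finset (Fin (j + 2)))).card : ℝ) ≤ 2 ^ (j + 2) := by
    have := Finset.card_erase_le (s := (Finset.univ : Finset (Finset (Fin (j + 2))))) (a := ∅)
    rw [Finset.card_univ, Fintype.card_finset, Fintype.card_fin] at this
    exact_mod_cast this
  simp only [overlapWeight, Finset.sum_add_distrib, Finset.sum_comm (t := Finset.univ.erase ∅),
    sum_sum_agreeWeight]
  calc _ ≤ (M * p ^ (j + 2)) ^ 2 * (1 / m) + 2 ^ (j + 2) * ((M * p ^ (j + 2)) ^ 2 / x) := by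
        refine add_le_add hcentre ((Finset.sum_le_card_nsmul _ _ _ hface).trans ?_)
        rw [nsmul_eq_mul]
        gcongr
    _ = _ := by ring

lemma inv_le_measureReal_iUnion_copyEvent (hj : 0 < j) (hjk : j ≤ k) (hp0 : 0 < p) (hp1 : p ≤ 1)
    (hq0 : 0 ≤ q) (hq1 : q ≤ 1)
    (hD : (k - j + 1) ^ 2 * Fintype.card V ^ (k - j - 1) + 2 * (j + 2) ≤ D) (hqD : q * D < 1)
    {c : ℝ} (hc0 : 0 < c) (hc : c ≤ (1 - q) ^ ((k - j + 1) * Fintype.card V ^ (k - j))) {x : ℝ}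
    (hx : x = (Fintype.card α : ℝ) ^ (k - j + 1) * p) (hx1 : 1 ≤ x) :
    (1 / (1 - q * D) + (1 / Fintype.card α + 2 ^ (j + 2) / x) / c ^ 2)⁻¹ ≤
      (uniformCube (Finset V)).real (⋃ f, copyEvent p q e f) := by
  set M : ℝ := (Fintype.card (Slot k j → α) : ℝ) with hM
  set ε : ℝ := 1 / Fintype.card α + 2 ^ (j + 2) / x
  set μ : Measure (Finset V → ℝ) := uniformCube (Finset V)
  have hfirst : c * (M * p ^ (j + 2)) ≤ ∑ f, μ.real (copyEvent p q e f) := by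
    have := Finset.univ.card_nsmul_le_sum (fun f => μ.real (copyEvent p q e f)) (c * p ^ (j + 2))
      fun f _ => mul_pow_le_measureReal_copyEvent hjk hp0.le hp1 hq0 hq1 hc
    rw [nsmul_eq_mul, Finset.card_univ, ← hM] at this
    linarith
  have hfirst_pos : 0 < c * (M * p ^ (j + 2)) := by positivity
  refine inv_le_measureReal_iUnion (fun f => measurableSet_copyEvent)
    (hfirst_pos.trans_le hfirst) ?_
  calc ∑ f, ∑ g, μ.real (copyEvent p q e f ∩ copyEvent p q e g)
      ≤ (∑ f, μ.real (copyEvent p q e f)) ^ 2 / (1 - q * D) + (M * p ^ (j + 2)) ^ 2 * ε := by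
        refine (Finset.sum_le_sum fun f _ => Finset.sum_le_sum fun g _ =>
          measureReal_copyEvent_inter_le hjk hp0 hp1 hq0 hq1 hD hqD).trans ?_
        simp only [Finset.sum_add_distrib, ← Finset.sum_div, ← Finset.mul_sum,
          ← Finset.sum_mul, ← sq]
        gcongr
        exact sum_overlapWeight_le hj hp0 hx hx1
    _ = (∑ f, μ.real (copyEvent p q e f)) ^ 2 / (1 - q * D) +
          (c * (M * p ^ (j + 2))) ^ 2 * (ε / c ^ 2) := by field_simp
    _ ≤ (∑ f, μ.real (copyEvent p q e f)) ^ 2 / (1 - q * D) +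
          (∑ f, μ.real (copyEvent p q e f)) ^ 2 * (ε / c ^ 2) := by gcongr
    _ = _ := by ring

end CopyEvent

section PersistentCopies

/-- The event that one and the same 4-tuple forms a copy of `M_j^*` in `G_r` for every `r` between
`p` and `q`. -/
def persistentCopies (k j n : ℕ) (p q : ℝ) : Set (Finset (Fin n) → ℝ) :=
  {t | ∃ (K C : Finset (Fin n)) (w a : Fin n),
    ∀ r : ℝ, p ≤ r → r ≤ q → IsMjStar (complexAt k n t r) k j K C w a}

variable {k j n : ℕ} {p q : ℝ}

lemma persistentCopies_mono {p' q' : ℝ} (hp : p' ≤ p) (hq : q ≤ q') :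
    persistentCopies k j n p' q' ⊆ persistentCopies k j n p q :=
  fun _ ⟨K, C, w, a, h⟩ => ⟨K, C, w, a, fun r hpr hrq => h r (hp.trans hpr) (hrq.trans hq)⟩

instance : IsProbabilityMeasure (birthMeasure n) :=
  inferInstanceAs (IsProbabilityMeasure (uniformCube (Finset (Fin n))))

lemma inv_le_measureReal_persistentCopies (hj : 0 < j) (hjk : j < k) (hp0 : 0 < p) (hp1 : p ≤ 1)
    (hq0 : 0 ≤ q) (hq1 : q ≤ 1) {m : ℕ} (hm : 0 < m) (hmn : Fintype.card (Slot k j) * m ≤ n)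
    {D : ℕ} (hD : (k - j + 1) ^ 2 * n ^ (k - j - 1) + 2 * (j + 2) ≤ D) (hqD : q * D < 1)
    {c : ℝ} (hc0 : 0 < c) (hc : c ≤ (1 - q) ^ ((k - j + 1) * n ^ (k - j)))
    (hx1 : 1 ≤ (m : ℝ) ^ (k - j + 1) * p) :
    (1 / (1 - q * D) + (1 / m + 2 ^ (j + 2) / ((m : ℝ) ^ (k - j + 1) * p)) / c ^ 2)⁻¹ ≤
      (birthMeasure n).real (persistentCopies k j n p q) := by
  obtain ⟨e⟩ : Nonempty (Slot k j × Fin m ↪ Fin n) := Function.Embedding.nonempty_of_card_le (by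
    rwa [Fintype.card_prod, Fintype.card_fin, Fintype.card_fin])
  have : Nonempty (Fin m) := ⟨⟨0, hm⟩⟩
  have hsub : ⋃ f, copyEvent p q e f ⊆ persistentCopies k j n p q :=
    Set.iUnion_subset fun f t ht => ⟨_, _, _, _, fun r hpr hrq =>
      isMjStar_complexAt_of_mem_thresholdEvent hj hjk ht hpr hrq⟩
  have hbound := inv_le_measureReal_iUnion_copyEvent (e := e) (x := (m : ℝ) ^ (k - j + 1) * p)
    hj hjk.le hp0 hp1 hq0 hq1 (by rwa [Fintype.card_fin]) hqD hc0 (by rwa [Fintype.card_fin])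
    (by rw [Fintype.card_fin]) hx1
  rw [Fintype.card_fin] at hbound
  exact hbound.trans (measureReal_mono hsub)

end PersistentCopies

section Asymptotics

lemma exp_neg_two_mul_le_one_sub {x : ℝ} (hx0 : 0 ≤ x) (hx : x ≤ 1 / 2) :
    Real.exp (-(2 * x)) ≤ 1 - x := by
  rw [Real.exp_neg, inv_le_iff_one_le_mul₀ (Real.exp_pos _)]
  nlinarith [Real.add_one_le_exp (2 * x)]

variable {p q : ℕ → ℝ}

lemma tendsto_natDiv_pow_mul_atTop {N d : ℕ} (hN : 0 < N)
    (hp : Tendsto (fun n => p n * (n : ℝ) ^ d) atTop atTop) :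
    Tendsto (fun n => ((n / N : ℕ) : ℝ) ^ d * p n) atTop atTop := by
  have hratio : Tendsto (fun n : ℕ => ((n / N : ℕ) : ℝ) / n) atTop (nhds (1 / N)) := by
    have := (tendsto_nat_floor_mul_div_atTop (R := ℝ) (a := 1 / N) (by positivity)).comp
      tendsto_natCast_atTop_atTop
    refine this.congr fun n => ?_
    rw [Function.comp_apply, one_div_mul_eq_div, Nat.floor_div_natCast, Nat.floor_natCast]
  refine ((hratio.pow d).pos_mul_atTop (by positivity) hp).congr' ?_
  filter_upwards [eventually_gt_atTop 0] with n hn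
  rw [div_pow]
  field_simp

lemma tendsto_zero_of_isBigO_inv_pow {d : ℕ} (hd : d ≠ 0)
    (hq : q =O[atTop] fun n => ((n : ℝ) ^ d)⁻¹) : Tendsto q atTop (nhds 0) :=
  hq.trans_tendsto ((tendsto_pow_atTop hd).comp tendsto_natCast_atTop_atTop).inv_tendsto_atTop

lemma exists_pos_eventually_le_one_sub_pow {d : ℕ} (hd : d ≠ 0) (M : ℕ) (hq0 : 0 ≤ q)
    (hq : q =O[atTop] fun n => ((n : ℝ) ^ d)⁻¹) :
    ∃ c > 0, ∀ᶠ n in atTop, c ≤ (1 - q n) ^ (M * n ^ d) := by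
  obtain ⟨L, hL⟩ := hq.bound
  have hq_zero := tendsto_zero_of_isBigO_inv_pow hd hq
  refine ⟨Real.exp (-(2 * (M * L))), Real.exp_pos _, ?_⟩
  filter_upwards [hL, hq_zero.eventually_le_const one_half_pos, eventually_gt_atTop 0]
    with n hLn hqn hn
  have hqL : q n * (n : ℝ) ^ d ≤ L := by
    rw [Real.norm_of_nonneg (hq0 n), Real.norm_of_nonneg (by positivity)] at hLn
    rwa [← le_div_iff₀ (by positivity), div_eq_mul_inv]
  calc Real.exp (-(2 * (M * L))) ≤ Real.exp (-(2 * (M * (q n * (n : ℝ) ^ d)))) := by gcongr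
    _ = Real.exp (-(2 * q n)) ^ (M * n ^ d) := by
        rw [← Real.exp_nat_mul]; push_cast; ring_nf
    _ ≤ (1 - q n) ^ (M * n ^ d) := by
        gcongr
        exact exp_neg_two_mul_le_one_sub (hq0 n) hqn

lemma tendsto_mul_natCast_pow_pred {d : ℕ} (hd : d ≠ 0) (a b : ℕ)
    (hq : q =O[atTop] fun n => ((n : ℝ) ^ d)⁻¹) :
    Tendsto (fun n => q n * (a * n ^ (d - 1) + b : ℕ)) atTop (nhds 0) := by
  have hD : (fun n : ℕ => ((a * n ^ (d - 1) + b : ℕ) : ℝ)) =O[atTop]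
      fun n : ℕ => (n : ℝ) ^ (d - 1) := by
    refine Asymptotics.IsBigO.of_bound (a + b) ?_
    filter_upwards [eventually_ge_atTop 1] with n hn
    have : (1 : ℝ) ≤ (n : ℝ) ^ (d - 1) := one_le_pow₀ (by exact_mod_cast hn)
    rw [Real.norm_of_nonneg (by positivity), Real.norm_of_nonneg (by positivity)]
    push_cast
    nlinarith [(Nat.cast_nonneg b : (0 : ℝ) ≤ b)]
  refine (hq.mul hD).trans_tendsto ?_
  refine (tendsto_inv_atTop_nhds_zero_nat (𝕜 := ℝ)).congr' ?_
  filter_upwards [eventually_gt_atTop 0] with n hn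
  rw [← Nat.succ_pred_eq_of_ne_zero hd, Nat.succ_eq_add_one, Nat.add_sub_cancel, pow_succ]
  field_simp

lemma tendsto_birthMeasure_persistentCopies {k j : ℕ} (hj : 0 < j) (hjk : j < k)
    (hp1 : ∀ n, p n ≤ 1) (hp : Tendsto (fun n => p n * (n : ℝ) ^ (k - j + 1)) atTop atTop)
    (hq0 : 0 ≤ q) (hq : q =O[atTop] fun n => ((n : ℝ) ^ (k - j))⁻¹) :
    Tendsto (fun n => (birthMeasure n).real (persistentCopies k j n (p n) (q n)))
      atTop (nhds 1) := by
  set N := Fintype.card (Slot k j)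
  have hN : 0 < N := Fintype.card_pos
  set D : ℕ → ℕ := fun n => (k - j + 1) ^ 2 * n ^ (k - j - 1) + 2 * (j + 2)
  set x : ℕ → ℝ := fun n => ((n / N : ℕ) : ℝ) ^ (k - j + 1) * p n
  have hd : k - j ≠ 0 := (Nat.sub_pos_of_lt hjk).ne'
  have hx : Tendsto x atTop atTop := tendsto_natDiv_pow_mul_atTop hN hp
  have hqD : Tendsto (fun n => q n * D n) atTop (nhds 0) := tendsto_mul_natCast_pow_pred hd _ _ hq
  have hm : Tendsto (fun n => n / N) atTop atTop := Nat.tendsto_div_const_atTop hN.ne'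
  have hq_zero := tendsto_zero_of_isBigO_inv_pow hd hq
  obtain ⟨c, hc0, hc⟩ := exists_pos_eventually_le_one_sub_pow hd (k - j + 1) hq0 hq
  have hlower : Tendsto (fun n => (1 / (1 - q n * D n) +
      (1 / ((n / N : ℕ) : ℝ) + 2 ^ (j + 2) / x n) / c ^ 2)⁻¹) atTop (nhds 1) := by
    have hm_inv := (tendsto_natCast_atTop_atTop (R := ℝ)).comp hm |>.const_div_atTop 1
    have := ((tendsto_const_nhds (x := (1 : ℝ))).div (hqD.const_sub 1) (by norm_num) |>.add
      ((hm_inv.add (hx.const_div_atTop (2 ^ (j + 2)))).div_const (c ^ 2))).inv₀ (by norm_num)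
    simpa using this
  refine tendsto_of_tendsto_of_tendsto_of_le_of_le' hlower tendsto_const_nhds ?_ ?_
  · filter_upwards [hp.eventually_gt_atTop 0, hx.eventually_ge_atTop 1,
      hqD.eventually_lt_const one_pos, hq_zero.eventually_le_const one_pos, hc,
      hm.eventually_gt_atTop 0] with n hpn hxn hqDn hqn hcn hmn
    exact inv_le_measureReal_persistentCopies hj hjk (pos_of_mul_pos_left hpn (by positivity))
      (hp1 n) (hq0 n) hqn hmn (Nat.mul_div_le n N) le_rfl hqDn hc0 hcn hxn
  · exact .of_forall fun n => measureReal_le_one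

theorem statement13_general {k j : ℕ} (hj : 1 ≤ j) (hjk : j < k)
    (hp : Tendsto (fun n => p n * (n : ℝ) ^ (k - j + 1)) atTop atTop)
    (hq : q =O[atTop] fun n => ((n : ℝ) ^ (k - j))⁻¹) :
    Tendsto (fun n => birthMeasure n (persistentCopies k j n (p n) (q n))) atTop (nhds 1) := by
  have hp_min : Tendsto (fun n => min (p n) 1 * (n : ℝ) ^ (k - j + 1)) atTop atTop := by
    have hpow : Tendsto (fun n : ℕ => (n : ℝ) ^ (k - j + 1)) atTop atTop :=
      (tendsto_pow_atTop (k - j).succ_ne_zero).comp tendsto_natCast_atTop_atTop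
    refine (tendsto_inf_atTop _ hp hpow).congr fun n => ?_
    rw [min_mul_of_nonneg _ _ (by positivity), one_mul]
  have hreal := tendsto_birthMeasure_persistentCopies hj hjk (fun n => min_le_right (p n) 1) hp_min
    (fun n => abs_nonneg (q n)) hq.norm_left
  rw [← ENNReal.tendsto_toReal_iff (fun n => measure_ne_top _ _) ENNReal.one_ne_top,
    ENNReal.toReal_one]
  exact tendsto_of_tendsto_of_tendsto_of_le_of_le hreal tendsto_const_nhds
    (fun n => measureReal_mono (persistentCopies_mono (min_le_left _ _) (le_abs_self _)))
    fun n => measureReal_le_one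

end Asymptotics

section Thresholds

variable {k j : ℕ}

lemma tendsto_pjPrevMinus_mul_pow (hj : 0 < j) :
    Tendsto (fun n => pjPrevMinus k j n * (n : ℝ) ^ (k - j + 1)) atTop atTop := by
  have hlog : Tendsto (fun n : ℕ => Real.log n) atTop atTop :=
    Real.tendsto_log_atTop.comp tendsto_natCast_atTop_atTop
  have hfactor : Tendsto (fun n : ℕ => 1 - 1 / Real.sqrt (Real.log n)) atTop (nhds 1) := by
    simpa using ((Real.tendsto_sqrt_atTop.comp hlog).const_div_atTop 1).const_sub 1
  have hconst : 0 < (j : ℝ) * (k - j + 1).factorial / (k - j + 2 : ℕ) := by positivity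
  refine ((hfactor.pos_mul_atTop one_pos hlog).atTop_mul_const hconst).congr' ?_
  filter_upwards [eventually_gt_atTop 0] with n hn
  rw [pjPrevMinus]
  field_simp

lemma pjOne_isBigO (k j : ℕ) :
    pjOne k j =O[atTop] fun n : ℕ => ((n : ℝ) ^ (k - j))⁻¹ := by
  refine (Asymptotics.isBigO_const_mul_self
    (10 * ((j : ℝ) + 1) * (k + 1).choose (j + 1))⁻¹ _ _).congr_left fun n => ?_
  rw [pjOne, one_div, ← mul_inv]

end Thresholds

/-- Lemma 4.8: whp one copy of `M_j^*` exists in `G_p` throughout `[p_{j-1}^-, p_j^{(1)}]`. -/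
theorem statement13 (k j : ℕ) (hk : 2 ≤ k) (hj : 1 ≤ j) (hjk : j < k) :
    Tendsto (fun n : ℕ => birthMeasure n {t : Finset (Fin n) → ℝ |
      ∃ (K C : Finset (Fin n)) (w a : Fin n),
        ∀ p : ℝ, pjPrevMinus k j n ≤ p → p ≤ pjOne k j n →
          IsMjStar (complexAt k n t p) k j K C w a})
      atTop (nhds 1) :=
  statement13_general hj hjk (tendsto_pjPrevMinus_mul_pow hj) (pjOne_isBigO k j)


end RSC
end

section
/- Let k ≥ 2 and j ∈ {1,…,k−1}. With high probability, there exists a pair (K,C) that forms a copy of M_j^- in G_p for every p in the range [p_j^{(1)}, p_j^−] simultaneously, where p_j^{(1)} := 1/(10·(j+1)·binom(k+1, j+1)·n^{k−j}) and p_j^− := (1 − 1/√(log n))·(j+1)·(log n)·(k−j)!/((k−j+1)·n^{k−j}). -/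
open MeasureTheory Filter

attribute [local instance] Classical.propDecidable

namespace RSC

variable {V : Type*}

/-!
Choose one `j`-subset `C` of every `(k+1)`-set `K`. The pair `(K, C)` is a copy of `M_j^-`
throughout `[a, b]` as soon as `K` is born by time `a` and every other `(k+1)`-set containing a
petal of the flower (a rival) is born after time `b`. This event has probability `a (1 - b) ^ r`,
where `r` is the number of rivals. For two different pairs the events are either incompatible, or
correlated only through the common rivals; a common rival contains two different petals, so there
are only `O(n ^ (k - j - 1))` of them and the correlation factor tends to `1` when
`b = o(n ^ (-(k - j - 1)))`. The second moment method then gives a copy whp once the expected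
number of events tends to infinity. For `a = p_j^{(1)}` and `b = p_j^-` it is at least
`c n ^ (j + 1) exp (-(j + 1) (log n - √(log n))) = c exp ((j + 1) √(log n))`.
-/

open scoped Topology Finset Nat

section SecondMoment

variable {Ω ι : Type*} {I : Finset ι} {A : ι → Set Ω}

lemma two_mul_sub_sq_le_indicator_biUnion (s : ℝ) (x : Ω) :
    2 * s * ∑ i ∈ I, (A i).indicator (1 : Ω → ℝ) x
        - s ^ 2 * (∑ i ∈ I, (A i).indicator (1 : Ω → ℝ) x) ^ 2
      ≤ (⋃ i ∈ I, A i).indicator 1 x := by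
  by_cases hx : x ∈ ⋃ i ∈ I, A i
  · rw [Set.indicator_of_mem hx, Pi.one_apply]
    linarith [sq_nonneg (1 - s * ∑ i ∈ I, (A i).indicator (1 : Ω → ℝ) x)]
  · have hsum : ∑ i ∈ I, (A i).indicator (1 : Ω → ℝ) x = 0 :=
      Finset.sum_eq_zero fun i hi =>
        Set.indicator_of_notMem (fun h => hx (Set.mem_biUnion hi h)) _
    simp [Set.indicator_of_notMem hx, hsum]

lemma sum_indicator_one_sq (x : Ω) :
    (∑ i ∈ I, (A i).indicator (1 : Ω → ℝ) x) ^ 2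
      = ∑ i ∈ I, ∑ l ∈ I, (A i ∩ A l).indicator (1 : Ω → ℝ) x := by
  simp only [sq, Finset.sum_mul_sum, Set.inter_indicator_one, Pi.mul_apply]

variable [MeasurableSpace Ω] {μ : Measure Ω}

lemma sum_measureReal_inter_le {c : ℝ} (hc : 0 ≤ c)
    (hcorr : ∀ i ∈ I, ∀ l ∈ I, i ≠ l → μ.real (A i ∩ A l) ≤ c * (μ.real (A i) * μ.real (A l))) :
    ∑ i ∈ I, ∑ l ∈ I, μ.real (A i ∩ A l)
      ≤ ∑ i ∈ I, μ.real (A i) + c * (∑ i ∈ I, μ.real (A i)) ^ 2 := by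
  have hterm : ∀ i ∈ I, ∀ l ∈ I, μ.real (A i ∩ A l) ≤
      (if i = l then μ.real (A i) else 0) + c * (μ.real (A i) * μ.real (A l)) := by
    intro i hi l hl
    split_ifs with h
    · subst h
      rw [Set.inter_self]
      exact le_add_of_nonneg_right (by positivity)
    · simpa using hcorr i hi l hl h
  calc ∑ i ∈ I, ∑ l ∈ I, μ.real (A i ∩ A l)
      ≤ ∑ i ∈ I, ∑ l ∈ I,
          ((if i = l then μ.real (A i) else 0) + c * (μ.real (A i) * μ.real (A l))) :=
        Finset.sum_le_sum fun i hi => Finset.sum_le_sum fun l hl => hterm i hi l hl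
    _ = ∑ i ∈ I, μ.real (A i) + c * (∑ i ∈ I, μ.real (A i)) ^ 2 := by
        simp only [Finset.sum_add_distrib, Finset.sum_ite_eq, ← Finset.mul_sum, sq,
          Finset.sum_mul_sum]
        congr 1
        exact Finset.sum_congr rfl fun i hi => if_pos hi

variable [IsFiniteMeasure μ]

lemma integrable_indicator_one {s : Set Ω} (hs : MeasurableSet s) :
    Integrable (s.indicator (1 : Ω → ℝ)) μ :=
  (integrable_const (1 : ℝ)).indicator hs

lemma integrable_sum_indicator_one_sq (hA : ∀ i ∈ I, MeasurableSet (A i)) :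
    Integrable (fun x => (∑ i ∈ I, (A i).indicator (1 : Ω → ℝ) x) ^ 2) μ := by
  simp only [sum_indicator_one_sq]
  exact integrable_finsetSum _ fun i hi => integrable_finsetSum _ fun l hl =>
    integrable_indicator_one ((hA i hi).inter (hA l hl))

lemma integral_sum_indicator_one (hA : ∀ i ∈ I, MeasurableSet (A i)) :
    ∫ x, ∑ i ∈ I, (A i).indicator (1 : Ω → ℝ) x ∂μ = ∑ i ∈ I, μ.real (A i) := by
  rw [integral_finsetSum _ fun i hi => integrable_indicator_one (hA i hi)]
  exact Finset.sum_congr rfl fun i hi => integral_indicator_one (hA i hi)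

lemma integral_sum_indicator_one_sq (hA : ∀ i ∈ I, MeasurableSet (A i)) :
    ∫ x, (∑ i ∈ I, (A i).indicator (1 : Ω → ℝ) x) ^ 2 ∂μ
      = ∑ i ∈ I, ∑ l ∈ I, μ.real (A i ∩ A l) := by
  simp only [sum_indicator_one_sq]
  rw [integral_finsetSum _ fun i hi => integrable_finsetSum _ fun l hl =>
    integrable_indicator_one ((hA i hi).inter (hA l hl))]
  exact Finset.sum_congr rfl fun i hi =>
    integral_sum_indicator_one fun l hl => (hA i hi).inter (hA l hl)

lemma two_mul_sub_sq_mul_le_measureReal_biUnion (hA : ∀ i ∈ I, MeasurableSet (A i)) (s : ℝ) :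
    2 * s * ∑ i ∈ I, μ.real (A i) - s ^ 2 * ∑ i ∈ I, ∑ l ∈ I, μ.real (A i ∩ A l)
      ≤ μ.real (⋃ i ∈ I, A i) := by
  have hU : MeasurableSet (⋃ i ∈ I, A i) := Finset.measurableSet_biUnion I hA
  have hN : Integrable (fun x => 2 * s * ∑ i ∈ I, (A i).indicator (1 : Ω → ℝ) x) μ :=
    (integrable_finsetSum _ fun i hi => integrable_indicator_one (hA i hi)).const_mul _
  have hN2 : Integrable (fun x => s ^ 2 * (∑ i ∈ I, (A i).indicator (1 : Ω → ℝ) x) ^ 2) μ :=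
    (integrable_sum_indicator_one_sq hA).const_mul _
  rw [← integral_sum_indicator_one hA, ← integral_sum_indicator_one_sq hA,
    ← integral_indicator_one hU, ← integral_const_mul, ← integral_const_mul,
    ← integral_sub hN hN2]
  exact integral_mono (hN.sub hN2) (integrable_indicator_one hU)
    (two_mul_sub_sq_le_indicator_biUnion s)

theorem two_sub_sub_inv_le_measureReal_biUnion (hA : ∀ i ∈ I, MeasurableSet (A i))
    {c : ℝ} (hc : 0 ≤ c) (hpos : 0 < ∑ i ∈ I, μ.real (A i))
    (hcorr : ∀ i ∈ I, ∀ l ∈ I, i ≠ l → μ.real (A i ∩ A l) ≤ c * (μ.real (A i) * μ.real (A l))) :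
    2 - c - (∑ i ∈ I, μ.real (A i))⁻¹ ≤ μ.real (⋃ i ∈ I, A i) := by
  set X := ∑ i ∈ I, μ.real (A i)
  calc 2 - c - X⁻¹
      = 2 * X⁻¹ * X - X⁻¹ ^ 2 * (X + c * X ^ 2) := by field_simp; ring
    _ ≤ 2 * X⁻¹ * X - X⁻¹ ^ 2 * ∑ i ∈ I, ∑ l ∈ I, μ.real (A i ∩ A l) := by
        gcongr
        exact sum_measureReal_inter_le hc hcorr
    _ ≤ μ.real (⋃ i ∈ I, A i) := two_mul_sub_sq_mul_le_measureReal_biUnion hA X⁻¹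

end SecondMoment

section Rivals

variable [DecidableEq V] {K L C D : Finset V} {m : ℕ}

lemma card_sdiff_of_card_eq_add (hCK : C ⊆ K) (hK : #K = #C + m) : #(K \ C) = m := by
  rw [Finset.card_sdiff_of_subset hCK, hK, Nat.add_sub_cancel_left]

lemma card_insert_of_mem_sdiff {w : V} (hw : w ∈ K \ C) : #(insert w C) = #C + 1 :=
  Finset.card_insert_of_notMem (Finset.mem_sdiff.1 hw).2

lemma card_lt_card_union_of_ne {P Q : Finset V} (hcard : #P = #Q) (hne : P ≠ Q) :
    #P < #(P ∪ Q) := by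
  refine Finset.card_lt_card (Finset.ssubset_iff_subset_ne.2 ⟨Finset.subset_union_left, ?_⟩)
  intro h
  exact hne (Finset.eq_of_subset_of_card_le (Finset.union_eq_left.1 h.symm) hcard.le).symm

variable [Fintype V]

/-- The sets, other than `K` but of the same size, that contain a petal of the flower `F(K,C)`:
the simplices that must be absent for `(K,C)` to form a copy of `M_j^-`. -/
noncomputable def rivals (K C : Finset V) : Finset (Finset V) :=
  (Finset.univ.powersetCard #K).filter fun S => S ≠ K ∧ ∃ P ∈ Flower K C, P ⊆ S

lemma mem_rivals {S : Finset V} :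
    S ∈ rivals K C ↔ #S = #K ∧ S ≠ K ∧ ∃ w ∈ K \ C, insert w C ⊆ S := by
  rw [rivals, Finset.mem_filter, Finset.mem_powersetCard_univ]
  refine and_congr_right' (and_congr_right' ⟨?_, ?_⟩)
  · rintro ⟨_, ⟨w, hw, rfl⟩, hS⟩
    exact ⟨w, hw, hS⟩
  · rintro ⟨w, hw, hS⟩
    exact ⟨_, ⟨w, hw, rfl⟩, hS⟩

lemma notMem_rivals_self : K ∉ rivals K C := fun h => (mem_rivals.1 h).2.1 rfl

lemma card_filter_subset_powersetCard_univ_le {B : Finset V} {r s : ℕ} (hrB : r ≤ #B)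
    (hrs : r ≤ s) :
    #((Finset.univ.powersetCard s).filter (B ⊆ ·)) ≤ (Fintype.card V).choose (s - r) := by
  obtain ⟨B', hB'B, rfl⟩ := Finset.exists_subset_card_eq hrB
  calc #((Finset.univ.powersetCard s).filter (B ⊆ ·))
      ≤ #((Finset.univ.powersetCard s).filter (B' ⊆ ·)) :=
        Finset.card_le_card <| Finset.monotone_filter_right _ fun _ _ h => hB'B.trans h
    _ = (Fintype.card V - #B').choose (s - #B') :=
        Finset.card_filter_powersetCard_subset _ _ _ (Finset.subset_univ _) hrs
    _ ≤ (Fintype.card V).choose (s - #B') := Nat.choose_le_choose _ (Nat.sub_le _ _)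

lemma card_rivals_le (hCK : C ⊆ K) (hK : #K = #C + (m + 1)) :
    #(rivals K C) ≤ (m + 1) * (Fintype.card V).choose m := by
  have hcover : rivals K C ⊆ (K \ C).biUnion fun w =>
      (Finset.univ.powersetCard #K).filter (insert w C ⊆ ·) := by
    intro S hS
    obtain ⟨hcard, -, w, hw, hwS⟩ := mem_rivals.1 hS
    simp only [Finset.mem_biUnion, Finset.mem_filter, Finset.mem_powersetCard_univ]
    exact ⟨w, hw, hcard, hwS⟩
  refine (Finset.card_le_card hcover).trans ?_
  rw [← card_sdiff_of_card_eq_add hCK hK]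
  refine Finset.card_biUnion_le_card_mul _ _ _ fun w hw => ?_
  convert card_filter_subset_powersetCard_univ_le (card_insert_of_mem_sdiff hw).ge
    (by omega : #C + 1 ≤ #K) using 2
  omega

lemma insert_ne_insert_of_notMem_rivals (hKL : K ≠ L) (hcard : #L = #K) (hL : L ∉ rivals K C)
    (hDL : D ⊆ L) {v w : V} (hw : w ∈ K \ C) (hv : v ∈ L \ D) : insert w C ≠ insert v D := by
  intro h
  refine hL (mem_rivals.2 ⟨hcard, hKL.symm, w, hw, ?_⟩)
  rw [h]
  exact Finset.insert_subset (Finset.mem_sdiff.1 hv).1 hDL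

lemma card_rivals_inter_rivals_le (hm : 1 ≤ m) (hCK : C ⊆ K) (hDL : D ⊆ L) (hCD : #C = #D)
    (hK : #K = #C + (m + 1)) (hL : #L = #D + (m + 1)) (hKL : K ≠ L) (hLK : L ∉ rivals K C) :
    #(rivals K C ∩ rivals L D) ≤ (m + 1) ^ 2 * Fintype.card V ^ (m - 1) := by
  have hcover : rivals K C ∩ rivals L D ⊆ ((K \ C) ×ˢ (L \ D)).biUnion fun w =>
      (Finset.univ.powersetCard #K).filter (insert w.1 C ∪ insert w.2 D ⊆ ·) := by
    intro S hS
    obtain ⟨hSK, hSL⟩ := Finset.mem_inter.1 hS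
    obtain ⟨hcard, -, w, hw, hwS⟩ := mem_rivals.1 hSK
    obtain ⟨-, -, v, hv, hvS⟩ := mem_rivals.1 hSL
    simp only [Finset.mem_biUnion, Finset.mem_filter, Finset.mem_powersetCard_univ]
    exact ⟨(w, v), Finset.mk_mem_product hw hv, hcard, Finset.union_subset hwS hvS⟩
  have hpairs : #((K \ C) ×ˢ (L \ D)) = (m + 1) ^ 2 := by
    rw [Finset.card_product, card_sdiff_of_card_eq_add hCK hK, card_sdiff_of_card_eq_add hDL hL, sq]
  refine (Finset.card_le_card hcover).trans ?_
  rw [← hpairs]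
  refine Finset.card_biUnion_le_card_mul _ _ _ fun w hw => ?_
  obtain ⟨hwK, hwL⟩ := Finset.mem_product.1 hw
  have hcardC := card_insert_of_mem_sdiff hwK
  have hcardD := card_insert_of_mem_sdiff hwL
  have hunion : #C + 2 ≤ #(insert w.1 C ∪ insert w.2 D) := by
    have := card_lt_card_union_of_ne (by omega)
      (insert_ne_insert_of_notMem_rivals hKL (by omega) hLK hDL hwK hwL)
    omega
  refine (card_filter_subset_powersetCard_univ_le hunion (by omega)).trans ?_
  rw [show #K - (#C + 2) = m - 1 by omega]
  exact Nat.choose_le_pow _ _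

end Rivals

section EarlyLate

variable {ι : Type*} {a b : ℝ} {I I' J J' : Finset ι}

/-- The event that all birth times indexed by `I` are at most `a` and all those indexed by `J`
exceed `b`. -/
def earlyLate (a b : ℝ) (I J : Finset ι) : Set (ι → ℝ) :=
  {t | (∀ i ∈ I, t i ≤ a) ∧ ∀ i ∈ J, b < t i}

lemma earlyLate_inter [DecidableEq ι] :
    earlyLate a b I J ∩ earlyLate a b I' J' = earlyLate a b (I ∪ I') (J ∪ J') := by
  ext t
  simp only [earlyLate, Set.mem_inter_iff, Set.mem_ofPred_eq, Finset.forall_mem_union]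
  tauto

lemma earlyLate_eq_empty (hab : a ≤ b) (hIJ : ¬Disjoint I J) : earlyLate a b I J = ∅ := by
  obtain ⟨i, hiI, hiJ⟩ := Finset.not_disjoint_iff.1 hIJ
  exact Set.eq_empty_of_forall_notMem fun t ht =>
    ((ht.1 i hiI).trans hab).not_gt (ht.2 i hiJ)

lemma earlyLate_eq_pi [DecidableEq ι] (hIJ : Disjoint I J) :
    earlyLate a b I J = (↑(I ∪ J) : Set ι).pi fun i => if i ∈ I then Set.Iic a else Set.Ioi b := by
  ext t
  simp only [earlyLate, Set.mem_pi, Finset.mem_coe, Finset.forall_mem_union, Set.mem_ofPred_eq]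
  refine and_congr (forall₂_congr fun i hi => ?_) (forall₂_congr fun i hi => ?_)
  · rw [if_pos hi, Set.mem_Iic]
  · rw [if_neg (Finset.disjoint_right.1 hIJ hi), Set.mem_Ioi]

lemma measurableSet_earlyLate : MeasurableSet (earlyLate a b I J) := by
  have hset : earlyLate a b I J
      = (⋂ i ∈ I, (fun t : ι → ℝ => t i) ⁻¹' Set.Iic a)
        ∩ ⋂ i ∈ J, (fun t : ι → ℝ => t i) ⁻¹' Set.Ioi b := by
    ext t
    simp [earlyLate]
  rw [hset]
  exact (Finset.measurableSet_biInter _ fun i _ => measurable_pi_apply i measurableSet_Iic).inter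
    (Finset.measurableSet_biInter _ fun i _ => measurable_pi_apply i measurableSet_Ioi)

lemma measureReal_pi_earlyLate [Fintype ι] (ν : Measure ℝ) [IsProbabilityMeasure ν]
    (hIJ : Disjoint I J) :
    (Measure.pi fun _ : ι => ν).real (earlyLate a b I J)
      = ν.real (Set.Iic a) ^ #I * ν.real (Set.Ioi b) ^ #J := by
  classical
  rw [earlyLate_eq_pi hIJ, measureReal_def, Measure.pi_pi_finset, ENNReal.toReal_prod,
    Finset.prod_union hIJ]
  congr 1
  · exact Finset.prod_eq_pow_card fun i hi => by rw [if_pos hi, measureReal_def]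
  · exact Finset.prod_eq_pow_card fun i hi => by
      rw [if_neg (Finset.disjoint_right.1 hIJ hi), measureReal_def]

end EarlyLate

section BirthTimes

variable {n : ℕ} {a b : ℝ}

instance : IsProbabilityMeasure (volume.restrict (Set.Icc (0 : ℝ) 1)) := ⟨by simp⟩

instance inst_s14 : IsProbabilityMeasure (birthMeasure n) := by
  unfold birthMeasure
  infer_instance

lemma measureReal_restrict_Icc_Iic (ha : a ∈ Set.Icc (0 : ℝ) 1) :
    (volume.restrict (Set.Icc (0 : ℝ) 1)).real (Set.Iic a) = a := by
  have hinter : Set.Iic a ∩ Set.Icc (0 : ℝ) 1 = Set.Icc 0 a := by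
    ext x
    exact ⟨fun ⟨hxa, hx0, _⟩ => ⟨hx0, hxa⟩, fun ⟨hx0, hxa⟩ => ⟨hxa, hx0, hxa.trans ha.2⟩⟩
  rw [measureReal_restrict_apply measurableSet_Iic, hinter, Real.volume_real_Icc_of_le ha.1,
    sub_zero]

lemma measureReal_restrict_Icc_Ioi (hb : b ∈ Set.Icc (0 : ℝ) 1) :
    (volume.restrict (Set.Icc (0 : ℝ) 1)).real (Set.Ioi b) = 1 - b := by
  rw [← Set.compl_Iic, probReal_compl_eq_one_sub measurableSet_Iic,
    measureReal_restrict_Icc_Iic hb]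

lemma birthMeasure_real_earlyLate (ha : a ∈ Set.Icc (0 : ℝ) 1) (hb : b ∈ Set.Icc (0 : ℝ) 1)
    {I J : Finset (Finset (Fin n))} (hIJ : Disjoint I J) :
    (birthMeasure n).real (earlyLate a b I J) = a ^ #I * (1 - b) ^ #J := by
  rw [birthMeasure, measureReal_pi_earlyLate _ hIJ, measureReal_restrict_Icc_Iic ha,
    measureReal_restrict_Icc_Ioi hb]

/-- The event, in terms of birth times, that guarantees a copy `(K,C)` of `M_j^-` throughout
`[a,b]`: `K` is born by time `a` and all its rivals after time `b`. -/
def isolatedOn (a b : ℝ) (K C : Finset (Fin n)) : Set (Finset (Fin n) → ℝ) :=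
  earlyLate a b {K} (rivals K C)

lemma birthMeasure_real_isolatedOn (ha : a ∈ Set.Icc (0 : ℝ) 1) (hb : b ∈ Set.Icc (0 : ℝ) 1)
    (K C : Finset (Fin n)) :
    (birthMeasure n).real (isolatedOn a b K C) = a * (1 - b) ^ #(rivals K C) := by
  rw [isolatedOn,
    birthMeasure_real_earlyLate ha hb (Finset.disjoint_singleton_left.2 notMem_rivals_self),
    Finset.card_singleton, pow_one]

lemma isolatedOn_inter_eq_empty (hab : a ≤ b) {K C L D : Finset (Fin n)}
    (hLK : L ∈ rivals K C) : isolatedOn a b K C ∩ isolatedOn a b L D = ∅ := by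
  rw [isolatedOn, isolatedOn, earlyLate_inter]
  refine earlyLate_eq_empty hab (Finset.not_disjoint_iff.2 ⟨L, ?_, ?_⟩)
  · simp
  · exact Finset.mem_union_left _ hLK

lemma birthMeasure_real_isolatedOn_inter_mul (ha : a ∈ Set.Icc (0 : ℝ) 1)
    (hb : b ∈ Set.Icc (0 : ℝ) 1) {K C L D : Finset (Fin n)} (hKL : K ≠ L) (hLK : L ∉ rivals K C)
    (hKL' : K ∉ rivals L D) :
    (birthMeasure n).real (isolatedOn a b K C ∩ isolatedOn a b L D)
        * (1 - b) ^ #(rivals K C ∩ rivals L D)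
      = (birthMeasure n).real (isolatedOn a b K C)
        * (birthMeasure n).real (isolatedOn a b L D) := by
  have hdisj : Disjoint ({K} ∪ {L}) (rivals K C ∪ rivals L D) := by
    simp only [Finset.disjoint_union_left, Finset.disjoint_singleton_left, Finset.mem_union]
    exact ⟨not_or.2 ⟨notMem_rivals_self, hKL'⟩, not_or.2 ⟨hLK, notMem_rivals_self⟩⟩
  have hcard : #({K} ∪ {L} : Finset (Finset (Fin n))) = 2 := by
    rw [Finset.card_union_of_disjoint (Finset.disjoint_singleton.2 hKL), Finset.card_singleton,
      Finset.card_singleton]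
  rw [birthMeasure_real_isolatedOn ha hb, birthMeasure_real_isolatedOn ha hb, isolatedOn,
    isolatedOn, earlyLate_inter, birthMeasure_real_earlyLate ha hb hdisj, hcard, mul_assoc,
    ← pow_add, Finset.card_union_add_card_inter]
  ring

lemma birthMeasure_real_isolatedOn_inter_le {m : ℕ} (hm : 1 ≤ m) (ha : 0 ≤ a) (hab : a ≤ b)
    (hb : b < 1) {K C L D : Finset (Fin n)} (hCK : C ⊆ K) (hDL : D ⊆ L) (hCD : #C = #D)
    (hK : #K = #C + (m + 1)) (hL : #L = #D + (m + 1)) (hKL : K ≠ L) :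
    (birthMeasure n).real (isolatedOn a b K C ∩ isolatedOn a b L D)
      ≤ ((1 - b) ^ ((m + 1) ^ 2 * n ^ (m - 1)))⁻¹
        * ((birthMeasure n).real (isolatedOn a b K C)
          * (birthMeasure n).real (isolatedOn a b L D)) := by
  have hb0 : 0 ≤ b := ha.trans hab
  have hb1 : 0 < 1 - b := sub_pos.2 hb
  by_cases hLK : L ∈ rivals K C
  · rw [isolatedOn_inter_eq_empty hab hLK, measureReal_empty]
    positivity
  by_cases hKL' : K ∈ rivals L D
  · rw [Set.inter_comm, isolatedOn_inter_eq_empty hab hKL', measureReal_empty]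
    positivity
  have hcommon : #(rivals K C ∩ rivals L D) ≤ (m + 1) ^ 2 * n ^ (m - 1) := by
    simpa only [Fintype.card_fin] using
      card_rivals_inter_rivals_le hm hCK hDL hCD hK hL hKL hLK
  rw [← birthMeasure_real_isolatedOn_inter_mul ⟨ha, (hab.trans_lt hb).le⟩ ⟨hb0, hb.le⟩ hKL hLK
    hKL', inv_mul_eq_div, le_div_iff₀ (by positivity)]
  exact mul_le_mul_of_nonneg_left
    (pow_le_pow_of_le_one hb1.le (sub_le_self 1 hb0) hcommon) measureReal_nonneg

end BirthTimes

section CopyExists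

variable {k j n : ℕ} {a b : ℝ}

lemma isSimplex_complexAt_iff (hk : 0 < k) {t : Finset (Fin n) → ℝ} {p : ℝ} {K : Finset (Fin n)} :
    IsSimplex (complexAt k n t p) k K ↔ #K = k + 1 ∧ t K ≤ p := by
  refine ⟨?_, fun ⟨hK, htK⟩ => ⟨Or.inr ⟨Finset.card_pos.1 (by omega), K, hK, htK, subset_rfl⟩, hK⟩⟩
  rintro ⟨⟨v, rfl⟩ | ⟨-, L, hL, htL, hKL⟩, hK⟩
  · rw [Finset.card_singleton] at hK
    omega
  · rw [Finset.eq_of_subset_of_card_le hKL (by omega)]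
    exact ⟨hL, htL⟩

lemma isMjMinus_complexAt_of_mem_isolatedOn (hj : 1 ≤ j) (hjk : j ≤ k) {K C : Finset (Fin n)}
    (hK : #K = k + 1) (hC : #C = j) (hCK : C ⊆ K) {t : Finset (Fin n) → ℝ}
    (ht : t ∈ isolatedOn a b K C) {p : ℝ} (hap : a ≤ p) (hpb : p ≤ b) :
    IsMjMinus (complexAt k n t p) k j K C := by
  have hk : 0 < k := by omega
  have htK : t K ≤ p := (ht.1 K (Finset.mem_singleton_self K)).trans hap
  refine ⟨(isSimplex_complexAt_iff hk).2 ⟨hK, htK⟩,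
    Or.inr ⟨Finset.card_pos.1 (by omega), K, hK, htK, hCK⟩, hC, hCK, ?_⟩
  rintro _ ⟨w, hw, rfl⟩ S hS hwS
  obtain ⟨hScard, htS⟩ := (isSimplex_complexAt_iff hk).1 hS
  by_contra hSK
  exact (ht.2 S (mem_rivals.2 ⟨hScard.trans hK.symm, hSK, w, hw, hwS⟩)).not_ge (htS.trans hpb)

lemma choose_mul_le_sum_birthMeasure_real_isolatedOn (hjk : j ≤ k) (ha : 0 ≤ a) (hab : a ≤ b)
    (hb : b ≤ 1) {C : Finset (Fin n) → Finset (Fin n)}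
    (hC : ∀ K ∈ Finset.univ.powersetCard (k + 1), C K ⊆ K ∧ #(C K) = j) :
    n.choose (k + 1) * (a * (1 - b) ^ ((k - j + 1) * n.choose (k - j)))
      ≤ ∑ K ∈ Finset.univ.powersetCard (k + 1), (birthMeasure n).real (isolatedOn a b K (C K)) := by
  have hb0 : 0 ≤ b := ha.trans hab
  have hcard : #(Finset.univ.powersetCard (k + 1) : Finset (Finset (Fin n))) = n.choose (k + 1) :=
    by rw [Finset.card_powersetCard, Finset.card_fin]
  rw [← hcard, ← nsmul_eq_mul]
  refine Finset.card_nsmul_le_sum _ _ _ fun K hK => ?_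
  obtain ⟨hCK, hCj⟩ := hC K hK
  rw [birthMeasure_real_isolatedOn ⟨ha, hab.trans hb⟩ ⟨hb0, hb⟩]
  refine mul_le_mul_of_nonneg_left ?_ ha
  refine pow_le_pow_of_le_one (sub_nonneg.2 hb) (sub_le_self 1 hb0) ?_
  have hKcard := Finset.mem_powersetCard_univ.1 hK
  simpa only [Fintype.card_fin] using card_rivals_le hCK (m := k - j) (by omega)

theorem le_birthMeasure_real_exists_isMjMinus (hj : 1 ≤ j) (hjk : j < k) (ha : 0 ≤ a)
    (hab : a ≤ b) (hb : b < 1)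
    (hX : 0 < n.choose (k + 1) * (a * (1 - b) ^ ((k - j + 1) * n.choose (k - j)))) :
    2 - ((1 - b) ^ ((k - j + 1) ^ 2 * n ^ (k - j - 1)))⁻¹
        - (n.choose (k + 1) * (a * (1 - b) ^ ((k - j + 1) * n.choose (k - j))))⁻¹
      ≤ (birthMeasure n).real {t | ∃ K C : Finset (Fin n), ∀ p : ℝ, a ≤ p → p ≤ b →
          IsMjMinus (complexAt k n t p) k j K C} := by
  have hsub : ∀ K ∈ (Finset.univ.powersetCard (k + 1) : Finset (Finset (Fin n))),
      ∃ C ⊆ K, #C = j := fun K hK =>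
    Finset.exists_subset_card_eq (by rw [Finset.mem_powersetCard_univ.1 hK]; omega)
  choose! C hCK hCj using hsub
  have hb1 : 0 < 1 - b := sub_pos.2 hb
  have hmean := choose_mul_le_sum_birthMeasure_real_isolatedOn hjk.le ha hab hb.le
    fun K hK => ⟨hCK K hK, hCj K hK⟩
  have hunion := two_sub_sub_inv_le_measureReal_biUnion (μ := birthMeasure n)
    (A := fun K => isolatedOn a b K (C K)) (fun K _ => measurableSet_earlyLate)
    (c := ((1 - b) ^ ((k - j + 1) ^ 2 * n ^ (k - j - 1)))⁻¹)
    (inv_nonneg.2 (pow_nonneg hb1.le _)) (hX.trans_le hmean) <|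
    fun K hK L hL hKL => by
      have hKcard := Finset.mem_powersetCard_univ.1 hK
      have hLcard := Finset.mem_powersetCard_univ.1 hL
      have hCKj := hCj K hK
      have hCLj := hCj L hL
      exact birthMeasure_real_isolatedOn_inter_le (by omega) ha hab hb (hCK K hK) (hCK L hL)
        (by omega) (by omega) (by omega) hKL
  refine (sub_le_sub_left (inv_anti₀ hX hmean) _).trans (hunion.trans (measureReal_mono ?_))
  refine Set.iUnion₂_subset fun K hK t ht => ⟨K, C K, fun p hap hpb => ?_⟩
  exact isMjMinus_complexAt_of_mem_isolatedOn hj hjk.le (Finset.mem_powersetCard_univ.1 hK)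
    (hCj K hK) (hCK K hK) ht hap hpb

end CopyExists

section Limit

lemma tendsto_one_sub_pow_of_mul_tendsto_zero {b : ℕ → ℝ} {N : ℕ → ℕ}
    (hb : ∀ᶠ n in atTop, 0 ≤ b n ∧ b n ≤ 1)
    (hN : Tendsto (fun n => N n * b n) atTop (𝓝 0)) :
    Tendsto (fun n => (1 - b n) ^ N n) atTop (𝓝 1) := by
  have hlower : Tendsto (fun n => 1 - N n * b n) atTop (𝓝 1) := by
    simpa only [sub_zero] using hN.const_sub 1
  refine tendsto_of_tendsto_of_tendsto_of_le_of_le' hlower tendsto_const_nhds ?_ ?_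
  · filter_upwards [hb] with n ⟨_, hb1⟩
    have hbernoulli := one_add_mul_le_pow (by linarith : -2 ≤ -b n) (N n)
    rw [← sub_eq_add_neg] at hbernoulli
    linarith
  · filter_upwards [hb] with n ⟨hb0, hb1⟩
    exact pow_le_one₀ (sub_nonneg.2 hb1) (sub_le_self 1 hb0)

theorem tendsto_birthMeasure_exists_isMjMinus {k j : ℕ} (hj : 1 ≤ j) (hjk : j < k) {a b : ℕ → ℝ}
    (ha : ∀ᶠ n in atTop, 0 ≤ a n) (hab : ∀ᶠ n in atTop, a n ≤ b n)
    (hb : Tendsto (fun n => b n * (n : ℝ) ^ (k - j - 1)) atTop (𝓝 0))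
    (hX : Tendsto (fun n => n.choose (k + 1)
      * (a n * (1 - b n) ^ ((k - j + 1) * n.choose (k - j)))) atTop atTop) :
    Tendsto (fun n => birthMeasure n {t | ∃ K C : Finset (Fin n), ∀ p : ℝ, a n ≤ p → p ≤ b n →
      IsMjMinus (complexAt k n t p) k j K C}) atTop (𝓝 1) := by
  have hb0 : ∀ᶠ n in atTop, 0 ≤ b n := by
    filter_upwards [ha, hab] with n han habn using han.trans habn
  have hb1 : ∀ᶠ n in atTop, b n < 1 := by
    filter_upwards [hb0, hb.eventually_lt_const one_pos, eventually_ge_atTop 1] with n hbn hlt hn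
    exact (le_mul_of_one_le_right hbn (one_le_pow₀ (by exact_mod_cast hn))).trans_lt hlt
  have hpow : Tendsto (fun n => (1 - b n) ^ ((k - j + 1) ^ 2 * n ^ (k - j - 1))) atTop (𝓝 1) := by
    refine tendsto_one_sub_pow_of_mul_tendsto_zero ?_ ?_
    · filter_upwards [hb0, hb1] with n hbn hbn1 using ⟨hbn, hbn1.le⟩
    · refine (mul_zero (((k - j + 1 : ℕ) : ℝ) ^ 2) ▸ hb.const_mul _).congr fun n => ?_
      push_cast
      ring
  have hlower := ((hpow.inv₀ one_ne_zero).const_sub 2).sub hX.inv_tendsto_atTop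
  rw [show (2 : ℝ) - 1⁻¹ - 0 = 1 by norm_num] at hlower
  have hreal : Tendsto (fun n => (birthMeasure n).real {t | ∃ K C : Finset (Fin n), ∀ p : ℝ,
      a n ≤ p → p ≤ b n → IsMjMinus (complexAt k n t p) k j K C}) atTop (𝓝 1) := by
    refine tendsto_of_tendsto_of_tendsto_of_le_of_le' hlower tendsto_const_nhds ?_
      (Eventually.of_forall fun n => measureReal_le_one)
    filter_upwards [ha, hab, hb1, hX.eventually_gt_atTop 0] with n han habn hbn hXn
    exact le_birthMeasure_real_exists_isMjMinus hj hjk han habn hbn hXn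
  rw [← ENNReal.ofReal_one]
  exact (ENNReal.tendsto_ofReal hreal).congr fun n => ofReal_measureReal

end Limit

section Thresholds

variable {k j n : ℕ}

lemma tendsto_log_natCast_atTop : Tendsto (fun n : ℕ => Real.log n) atTop atTop :=
  Real.tendsto_log_atTop.comp tendsto_natCast_atTop_atTop

lemma tendsto_sub_sqrt_atTop : Tendsto (fun x : ℝ => x - √x) atTop atTop := by
  have hfactor : Tendsto (fun x : ℝ => √x * (√x - 1)) atTop atTop :=
    Real.tendsto_sqrt_atTop.atTop_mul_atTop₀
      (tendsto_atTop_add_const_right _ _ Real.tendsto_sqrt_atTop)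
  refine hfactor.congr' ?_
  filter_upwards [eventually_ge_atTop 0] with x hx
  rw [mul_sub, Real.mul_self_sqrt hx, mul_one]

lemma exp_neg_le_one_sub {b : ℝ} (hb : b ≤ 1 / 2) :
    Real.exp (-(b + 2 * b ^ 2)) ≤ 1 - b := by
  have hb1 : 0 < 1 - b := by linarith
  rw [← Real.le_log_iff_exp_le hb1]
  refine le_trans ?_ (Real.one_sub_inv_le_log_of_pos hb1)
  have hinv : (1 - b)⁻¹ ≤ 1 + (b + 2 * b ^ 2) := by
    rw [inv_le_iff_one_le_mul₀ hb1]
    nlinarith [mul_nonneg (sq_nonneg b) (by linarith : 0 ≤ 1 - 2 * b)]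
  linarith

lemma exp_neg_le_one_sub_pow {b : ℝ} (hb : b ≤ 1 / 2) (N : ℕ) :
    Real.exp (-(N * b + 2 * b * (N * b))) ≤ (1 - b) ^ N :=
  calc Real.exp (-(N * b + 2 * b * (N * b)))
      = Real.exp (-(b + 2 * b ^ 2)) ^ N := by rw [← Real.exp_nat_mul]; ring_nf
    _ ≤ (1 - b) ^ N := by gcongr; exact exp_neg_le_one_sub hb

/-- The constant factor of `p_j^-`, so that `p_j^- = pjCoeff (log n - √(log n)) / n ^ (k - j)`. -/
noncomputable def pjCoeff (k j : ℕ) : ℝ :=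
  (j + 1) * (k - j)! / (k - j + 1 : ℕ)

lemma pjCoeff_pos : 0 < pjCoeff k j := by
  unfold pjCoeff
  positivity

lemma pjMinus_eq :
    pjMinus k j n = pjCoeff k j * (Real.log n - √(Real.log n)) / (n : ℝ) ^ (k - j) := by
  have hlog : (1 - 1 / √(Real.log n)) * Real.log n = Real.log n - √(Real.log n) := by
    rw [sub_mul, one_mul, one_div_mul_eq_div, Real.div_sqrt]
  rw [pjMinus, pjCoeff, ← hlog]
  ring

lemma pjMinus_le : pjMinus k j n ≤ pjCoeff k j * Real.log n / (n : ℝ) ^ (k - j) := by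
  rw [pjMinus_eq]
  gcongr
  · exact pjCoeff_pos.le
  · exact sub_le_self _ (Real.sqrt_nonneg _)

lemma pjOne_nonneg : 0 ≤ pjOne k j n := by
  unfold pjOne
  positivity

lemma eventually_pjOne_le_pjMinus (k j : ℕ) : ∀ᶠ n in atTop, pjOne k j n ≤ pjMinus k j n := by
  have hlarge := (tendsto_sub_sqrt_atTop.comp tendsto_log_natCast_atTop).const_mul_atTop
    (pjCoeff_pos (k := k) (j := j))
  filter_upwards [hlarge.eventually_ge_atTop (1 / (10 * ((j : ℝ) + 1) * (k + 1).choose (j + 1)))]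
    with n hn
  rw [pjMinus_eq, pjOne, ← div_div]
  gcongr
  exact hn

lemma eventually_pjMinus_nonneg (k j : ℕ) : ∀ᶠ n in atTop, 0 ≤ pjMinus k j n :=
  (eventually_pjOne_le_pjMinus k j).mono fun _ h => pjOne_nonneg.trans h

lemma tendsto_pjMinus_mul_pow_mul_log_pow (hjk : j < k) (i : ℕ) :
    Tendsto (fun n : ℕ => pjMinus k j n * (n : ℝ) ^ (k - j - 1) * Real.log n ^ i) atTop (𝓝 0) := by
  have hlog : Tendsto (fun n : ℕ => pjCoeff k j * (Real.log n ^ (i + 1) / n)) atTop (𝓝 0) := by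
    simpa only [mul_zero, id, Function.comp_def] using
      ((Real.isLittleO_pow_log_id_atTop (n := i + 1)).tendsto_div_nhds_zero.comp
        tendsto_natCast_atTop_atTop).const_mul (pjCoeff k j)
  refine tendsto_of_tendsto_of_tendsto_of_le_of_le' tendsto_const_nhds hlog ?_ ?_
  · filter_upwards [eventually_pjMinus_nonneg k j] with n hn
    positivity
  · filter_upwards [eventually_ge_atTop 1] with n hn
    have hn0 : (n : ℝ) ≠ 0 := by positivity
    calc pjMinus k j n * (n : ℝ) ^ (k - j - 1) * Real.log n ^ i
        ≤ pjCoeff k j * Real.log n / (n : ℝ) ^ (k - j) * (n : ℝ) ^ (k - j - 1)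
            * Real.log n ^ i := by
          gcongr
          exact pjMinus_le
      _ = pjCoeff k j * (Real.log n ^ (i + 1) / n) := by
          obtain ⟨m, hm⟩ : ∃ m, k - j = m + 1 := ⟨k - j - 1, by omega⟩
          rw [hm, Nat.add_sub_cancel]
          field_simp
          ring

lemma tendsto_pjMinus_mul_log (hjk : j < k) :
    Tendsto (fun n : ℕ => pjMinus k j n * Real.log n) atTop (𝓝 0) := by
  refine squeeze_zero' ?_ ?_ (tendsto_pjMinus_mul_pow_mul_log_pow hjk 1)
  · filter_upwards [eventually_pjMinus_nonneg k j] with n hn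
    positivity
  · filter_upwards [eventually_pjMinus_nonneg k j, eventually_ge_atTop 1] with n hn hn1
    rw [pow_one]
    gcongr
    exact le_mul_of_one_le_right hn (one_le_pow₀ (by exact_mod_cast hn1))

lemma mul_pjMinus_le (hn : n ≠ 0) (hb : 0 ≤ pjMinus k j n) :
    ((k - j + 1) * n.choose (k - j) : ℕ) * pjMinus k j n
      ≤ (j + 1) * (Real.log n - √(Real.log n)) :=
  calc ((k - j + 1) * n.choose (k - j) : ℕ) * pjMinus k j n
      = (k - j + 1 : ℕ) * (n.choose (k - j) : ℝ) * pjMinus k j n := by push_cast; ring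
    _ ≤ (k - j + 1 : ℕ) * ((n : ℝ) ^ (k - j) / (k - j)!) * pjMinus k j n := by
        gcongr
        exact Nat.choose_le_pow_div _ _
    _ = (j + 1) * (Real.log n - √(Real.log n)) := by
        rw [pjMinus_eq, pjCoeff]
        field_simp

lemma eventually_exp_le_one_sub_pjMinus_pow (hjk : j < k) :
    ∀ᶠ n : ℕ in atTop, Real.exp (-((j + 1) * (Real.log n - √(Real.log n))) - 1)
      ≤ (1 - pjMinus k j n) ^ ((k - j + 1) * n.choose (k - j)) := by
  have hsmall : Tendsto (fun n : ℕ => 2 * (j + 1) * (pjMinus k j n * Real.log n)) atTop (𝓝 0) := by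
    simpa only [mul_zero] using (tendsto_pjMinus_mul_log hjk).const_mul (2 * ((j : ℝ) + 1))
  filter_upwards [eventually_pjMinus_nonneg k j, hsmall.eventually_le_const one_pos,
    tendsto_log_natCast_atTop.eventually_ge_atTop 1, eventually_ne_atTop 0] with n hb hsm hlog hn
  set b := pjMinus k j n
  set N := (k - j + 1) * n.choose (k - j)
  have hNb : N * b ≤ (j + 1) * (Real.log n - √(Real.log n)) := mul_pjMinus_le hn hb
  have hb2 : b ≤ 1 / 2 := by
    have : b ≤ (j + 1) * (b * Real.log n) := by
      nlinarith [mul_nonneg hb (sub_nonneg.2 hlog), mul_nonneg (Nat.cast_nonneg' (α := ℝ) j)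
        (mul_nonneg hb (zero_le_one.trans hlog))]
    linarith
  have herror : 2 * b * (N * b) ≤ 1 :=
    calc 2 * b * (N * b) ≤ 2 * b * ((j + 1) * Real.log n) := by
          refine mul_le_mul_of_nonneg_left (hNb.trans ?_) (by positivity)
          gcongr
          exact sub_le_self _ (Real.sqrt_nonneg _)
      _ = 2 * (j + 1) * (b * Real.log n) := by ring
      _ ≤ 1 := hsm
  refine le_trans ?_ (exp_neg_le_one_sub_pow hb2 N)
  gcongr
  linarith

lemma exists_pos_mul_pow_le_choose_mul_pjOne (hjk : j ≤ k) :
    ∃ c > 0, ∀ᶠ n : ℕ in atTop,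
      c * (n : ℝ) ^ (j + 1) ≤ n.choose (k + 1) * pjOne k j n := by
  obtain ⟨c, hc, hbound⟩ := (isTheta_choose (k + 1)).isBigO_symm.exists_pos
  have hchoose : 0 < (k + 1).choose (j + 1) := Nat.choose_pos (by omega)
  refine ⟨c⁻¹ * (10 * ((j : ℝ) + 1) * (k + 1).choose (j + 1))⁻¹, by positivity, ?_⟩
  filter_upwards [hbound.bound, eventually_ge_atTop 1] with n hn hn1
  rw [Real.norm_of_nonneg (by positivity), Real.norm_of_nonneg (by positivity)] at hn
  calc c⁻¹ * (10 * ((j : ℝ) + 1) * (k + 1).choose (j + 1))⁻¹ * (n : ℝ) ^ (j + 1)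
      = c⁻¹ * (n : ℝ) ^ (k + 1) * pjOne k j n := by
        have hpow : (n : ℝ) ^ (k + 1) = (n : ℝ) ^ (j + 1) * (n : ℝ) ^ (k - j) := by
          rw [← pow_add, show j + 1 + (k - j) = k + 1 by omega]
        rw [pjOne, hpow]
        field_simp
    _ ≤ n.choose (k + 1) * pjOne k j n := by
        gcongr
        · exact pjOne_nonneg
        · rwa [inv_mul_le_iff₀ hc]

theorem tendsto_choose_mul_pjOne_mul_one_sub_pjMinus_pow (hjk : j < k) :
    Tendsto (fun n : ℕ => n.choose (k + 1)
      * (pjOne k j n * (1 - pjMinus k j n) ^ ((k - j + 1) * n.choose (k - j)))) atTop atTop := by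
  obtain ⟨c, hc, hchoose⟩ := exists_pos_mul_pow_le_choose_mul_pjOne hjk.le
  have hexp : Tendsto (fun n : ℕ => c * Real.exp ((j + 1) * √(Real.log n) - 1)) atTop atTop :=
    (Real.tendsto_exp_atTop.comp (tendsto_atTop_add_const_right _ _
      ((Real.tendsto_sqrt_atTop.comp tendsto_log_natCast_atTop).const_mul_atTop
        (by positivity)))).const_mul_atTop hc
  refine tendsto_atTop_mono' _ ?_ hexp
  filter_upwards [hchoose, eventually_exp_le_one_sub_pjMinus_pow hjk, eventually_ge_atTop 1]
    with n hn hpow hn1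
  have hnexp : (n : ℝ) ^ (j + 1) = Real.exp ((j + 1) * Real.log n) := by
    rw [← Nat.cast_add_one, Real.exp_nat_mul, Real.exp_log (by positivity)]
  calc c * Real.exp ((j + 1) * √(Real.log n) - 1)
      = c * (n : ℝ) ^ (j + 1) * Real.exp (-((j + 1) * (Real.log n - √(Real.log n))) - 1) := by
        rw [hnexp, mul_assoc, ← Real.exp_add]
        ring_nf
    _ ≤ n.choose (k + 1) * pjOne k j n
          * (1 - pjMinus k j n) ^ ((k - j + 1) * n.choose (k - j)) := by
        gcongr
        exact mul_nonneg (Nat.cast_nonneg _) pjOne_nonneg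
    _ = _ := mul_assoc _ _ _

end Thresholds

/-- Lemma 4.9: whp one copy of `M_j^-` exists in `G_p` throughout `[p_j^{(1)}, p_j^-]`. -/
theorem statement14 (k j : ℕ) (hk : 2 ≤ k) (hj : 1 ≤ j) (hjk : j < k) :
    Tendsto (fun n : ℕ => birthMeasure n {t : Finset (Fin n) → ℝ |
      ∃ K C : Finset (Fin n),
        ∀ p : ℝ, pjOne k j n ≤ p → p ≤ pjMinus k j n →
          IsMjMinus (complexAt k n t p) k j K C})
      atTop (nhds 1) := by
  have hsmall : Tendsto (fun n : ℕ => pjMinus k j n * (n : ℝ) ^ (k - j - 1)) atTop (𝓝 0) := by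
    simpa only [pow_zero, mul_one] using tendsto_pjMinus_mul_pow_mul_log_pow hjk 0
  exact tendsto_birthMeasure_exists_isMjMinus hj hjk (Eventually.of_forall fun _ => pjOne_nonneg)
    (eventually_pjOne_le_pjMinus k j) hsmall
    (tendsto_choose_mul_pjOne_mul_one_sub_pjMinus_pow hjk)

end RSC
end
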